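/- arXiv:1902.00768 — 7 statements merged into one kernel-verified Lean document; each statement's English description precedes it below -/
import Mathlib

section
/- There exists a universal constant C > 0 such that for all integers T, p, n ≥ 1, Talagrand's γ₂ functional of the unit sphere S^{Tp−1} ⊂ ℝ^{Tp} with respect to the metric d_⊖(x, y) := ‖Toep_{T,n}(x − y)‖_op satisfies γ₂(S^{Tp−1}, d_⊖) ≤ C·√( T·p·min{T, log²(eTp)·log²(eT)} ). -/
open scoped ENNReal

/-- ℓ₂→ℓ₂ operator norm of a real matrix. -/
noncomputable def opNorm {α β : Type*} [Fintype α] [Fintype β] [DecidableEq β]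
    (A : Matrix α β ℝ) : ℝ :=
  ‖LinearMap.toContinuousLinearMap (Matrix.toEuclideanLin A)‖

/-- The banded block-Toeplitz matrix `Toep_{T,n}(v̄)` whose `(i,j)`-th `1×p` block is
`v_{T−(j−i)}ᵀ` when `0 ≤ j−i ≤ T−1` and zero otherwise. -/
noncomputable def Toep (T p n : ℕ) (v : Fin T → Fin p → ℝ) :
    Matrix (Fin n) (Fin (n + T - 1) × Fin p) ℝ :=
  Matrix.of fun i jk =>
    if h : (i : ℕ) ≤ (jk.1 : ℕ) ∧ (jk.1 : ℕ) - (i : ℕ) < T ∧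
        T - 1 - ((jk.1 : ℕ) - (i : ℕ)) < T
    then v ⟨T - 1 - ((jk.1 : ℕ) - (i : ℕ)), h.2.2⟩ jk.2
    else 0

/-- An admissible sequence of partitions for Talagrand's `γ₂` functional. -/
def IsAdmissible {X : Type*} (A : ℕ → X → Set X) : Prop :=
  (∀ n x, x ∈ A n x) ∧
  (∀ n x y, y ∈ A n x → A n y = A n x) ∧
  (Set.range (A 0)).Subsingleton ∧
  (∀ n, (Set.range (A n)).Finite ∧ Nat.card (Set.range (A n)) ≤ 2 ^ 2 ^ n)

/-- Diameter of a set with respect to a distance function `d`. -/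
noncomputable def diamD {X : Type*} (d : X → X → ℝ) (s : Set X) : ℝ≥0∞ :=
  ⨆ x ∈ s, ⨆ y ∈ s, ENNReal.ofReal (d x y)

/-- Talagrand's `γ₂` functional of `(X, d)`. -/
noncomputable def gamma2 {X : Type*} (d : X → X → ℝ) : ℝ≥0∞ :=
  ⨅ (A : ℕ → X → Set X) (_ : IsAdmissible A),
    ⨆ x : X, ∑' n : ℕ, (2 : ℝ≥0∞) ^ ((n : ℝ) / 2) * diamD d (A n x)

lemma sum_zmod_val {A : Type*} [AddCommMonoid A] (M : ℕ) [NeZero M] (f : ℕ → A) :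
    ∑ a : ZMod M, f a.val = ∑ s ∈ Finset.range M, f s := by
  cases M with
  | zero => exact absurd rfl (NeZero.ne 0)
  | succ n => exact Fin.sum_univ_eq_sum_range f (n + 1)

lemma dft_parseval (M : ℕ) [NeZero M] (Φ : ZMod M → ℂ) :
    ∑ k, ‖ZMod.dft Φ k‖ ^ 2 = M * ∑ j, ‖Φ j‖ ^ 2 := by
  have key : ∑ k, ZMod.dft Φ k * (starRingEnd ℂ) (ZMod.dft Φ k)
      = (M : ℂ) * ∑ j, Φ j * (starRingEnd ℂ) (Φ j) := by
    have h1 : ∀ j, ∑ k, ZMod.stdAddChar (-(k * -j)) * ZMod.dft Φ k = (M : ℂ) * Φ j := by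
      intro j
      have := congrFun (ZMod.dft_dft Φ) (-j)
      rw [ZMod.dft_apply] at this
      simpa using this
    calc ∑ k, ZMod.dft Φ k * (starRingEnd ℂ) (ZMod.dft Φ k)
        = ∑ k, ∑ j, (ZMod.stdAddChar (-(j * k)) * Φ j) * (starRingEnd ℂ) (ZMod.dft Φ k) := by
          refine Finset.sum_congr rfl fun k _ => ?_
          conv_lhs => rw [ZMod.dft_apply Φ k]
          rw [Finset.sum_mul]
          simp [ZMod.dft_apply]
      _ = ∑ j, ∑ k, (ZMod.stdAddChar (-(j * k)) * Φ j) * (starRingEnd ℂ) (ZMod.dft Φ k) :=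
          Finset.sum_comm
      _ = ∑ j, Φ j * (starRingEnd ℂ) ((M : ℂ) * Φ j) := by
          refine Finset.sum_congr rfl fun j _ => ?_
          rw [← h1 j, map_sum, Finset.mul_sum]
          refine Finset.sum_congr rfl fun k _ => ?_
          rw [map_mul, ← AddChar.map_neg_eq_conj]
          rw [show -(-(k * -j)) = -(j*k) by ring]
          ring
      _ = _ := by
          rw [Finset.mul_sum]
          refine Finset.sum_congr rfl fun j _ => ?_
          simp; ring
  simp only [Complex.mul_conj, Complex.normSq_eq_norm_sq] at key
  exact_mod_cast key

lemma conv_bound (p M : ℕ) [NeZero M] (w u : Fin p → ZMod M → ℂ) (B : ℝ)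
    (hB : ∀ k, ∑ c, ‖ZMod.dft (w c) k‖ ^ 2 ≤ B ^ 2) :
    ∑ i, ‖∑ c, ∑ a, w c a * u c (i + a)‖ ^ 2 ≤ B ^ 2 * ∑ c, ∑ t, ‖u c t‖ ^ 2 := by
  set y : ZMod M → ℂ := fun i => ∑ c, ∑ a, w c a * u c (i + a) with hy
  have hM : (0 : ℝ) < M := by exact_mod_cast Nat.pos_of_ne_zero (NeZero.ne M)
  have hhat : ∀ k, ZMod.dft y k = ∑ c, ZMod.dft (w c) (-k) * ZMod.dft (u c) k := by
    intro k
    simp only [ZMod.dft_apply, hy, smul_eq_mul, Finset.mul_sum, Finset.sum_mul]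
    rw [Finset.sum_comm]
    refine Finset.sum_congr rfl fun c _ => ?_
    rw [Finset.sum_comm]
    rw [Finset.sum_comm (γ := ZMod M) (s := Finset.univ)]
    rw [Finset.sum_comm]
    conv_rhs => rw [Finset.sum_comm]
    refine Finset.sum_congr rfl fun a _ => ?_
    conv_rhs => rw [← Equiv.sum_comp (Equiv.addRight a)]
    refine Finset.sum_congr rfl fun i _ => ?_
    simp only [Equiv.coe_addRight]
    have : (ZMod.stdAddChar (-(i * k)) : ℂ) =
        ZMod.stdAddChar (-(a * -k)) * ZMod.stdAddChar (-((i + a) * k)) := by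
      rw [← AddChar.map_add_eq_mul]; congr 1; ring
    rw [this]; ring
  have hb : ∀ k, ‖ZMod.dft y k‖ ^ 2 ≤ B ^ 2 * ∑ c, ‖ZMod.dft (u c) k‖ ^ 2 := by
    intro k
    rw [hhat]
    have h1 : ‖∑ c, ZMod.dft (w c) (-k) * ZMod.dft (u c) k‖ ≤
        ∑ c, ‖ZMod.dft (w c) (-k)‖ * ‖ZMod.dft (u c) k‖ := by
      refine (norm_sum_le _ _).trans (le_of_eq ?_)
      simp
    calc _ ≤ (∑ c, ‖ZMod.dft (w c) (-k)‖ * ‖ZMod.dft (u c) k‖) ^ 2 := by gcongr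
      _ ≤ (∑ c, ‖ZMod.dft (w c) (-k)‖ ^ 2) * ∑ c, ‖ZMod.dft (u c) k‖ ^ 2 :=
          Finset.sum_mul_sq_le_sq_mul_sq _ _ _
      _ ≤ _ := by
          gcongr
          exact hB _
  have h2 : ∑ k, ‖ZMod.dft y k‖ ^ 2 ≤ B ^ 2 * ∑ c, ∑ k, ‖ZMod.dft (u c) k‖ ^ 2 := by
    rw [Finset.sum_comm, Finset.mul_sum]
    exact Finset.sum_le_sum fun k _ => hb k
  rw [dft_parseval] at h2
  simp only [dft_parseval] at h2
  rw [← Finset.mul_sum] at h2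
  have : (M : ℝ) * ∑ j, ‖y j‖ ^ 2 ≤ M * (B ^ 2 * ∑ c, ∑ t, ‖u c t‖ ^ 2) := by linarith
  exact le_of_mul_le_mul_left this hM
lemma sum_blocks (T n : ℕ) (f : ℕ → ℝ) :
    ∑ r ∈ Finset.range n, ∑ t ∈ Finset.range T, f (r * T + t) =
      ∑ j ∈ Finset.range (n * T), f j := by
  induction n with
  | zero => simp
  | succ n ih => rw [Finset.sum_range_succ, ih, Nat.succ_mul, Finset.sum_range_add]

/-- The zero-padded, reversed coefficient sequence. -/
noncomputable def wseq (T p : ℕ) (v : Fin T → Fin p → ℝ) (c : Fin p) (s : ℕ) : ℝ :=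
  if h : s < T then v ⟨T - 1 - s, by omega⟩ c else 0

lemma toep_row (T p n : ℕ) (v : Fin T → Fin p → ℝ)
    (u : EuclideanSpace ℝ (Fin (n + T - 1) × Fin p)) (i : Fin n) :
    (Matrix.toEuclideanLin (Toep T p n v) u) i = ∑ c, ∑ s ∈ Finset.range T,
      wseq T p v c s * (if h : (i : ℕ) + s < n + T - 1 then u (⟨i + s, h⟩, c) else 0) := by
  have h1 : (Matrix.toEuclideanLin (Toep T p n v) u) i =
      ∑ jk, Toep T p n v i jk * u jk := by
    simp [Matrix.toLpLin_apply, Matrix.mulVec, dotProduct]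
  rw [h1, Fintype.sum_prod_type, Finset.sum_comm]
  refine Finset.sum_congr rfl fun c _ => ?_
  let g : ℕ → ℝ := fun j => (if (i : ℕ) ≤ j then wseq T p v c (j - i) else 0) *
    (if h : j < n + T - 1 then u (⟨j, h⟩, c) else 0)
  have h2 : ∀ j : Fin (n + T - 1), Toep T p n v i (j, c) * u (j, c) = g j := by
    intro j
    simp only [g, Toep, Matrix.of_apply, wseq, j.2, dite_true, Fin.eta]
    congr 1
    by_cases hij : (i : ℕ) ≤ j
    · by_cases hT : (j : ℕ) - i < T
      · have : T - 1 - ((j : ℕ) - i) < T := by omega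
        simp [hij, hT, this]
      · simp [hT]
    · simp [hij]
  rw [Finset.sum_congr rfl fun j _ => h2 j, Fin.sum_univ_eq_sum_range]
  have h3 : ∑ j ∈ Finset.Ico (i : ℕ) (i + T), g j = ∑ j ∈ Finset.range (n + T - 1), g j := by
    apply Finset.sum_subset
    · intro j hj
      simp only [Finset.mem_Ico, Finset.mem_range] at *
      have := i.2
      omega
    · intro j _ hj
      simp only [Finset.mem_Ico, not_and, not_lt] at hj
      simp only [g, wseq]
      by_cases hij : (i : ℕ) ≤ j
      · have := hj hij
        have : ¬ (j - i < T) := by omega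
        simp [this]
      · simp [hij]
  rw [← h3, Finset.sum_Ico_eq_sum_range]
  simp [g]

/-- The (coefficientwise) discrete Fourier transform on `ZMod (2 * T)`. -/
noncomputable def FF (T p : ℕ) [NeZero T] (v : Fin T → Fin p → ℝ) (k : ZMod (2 * T)) :
    EuclideanSpace ℂ (Fin p) :=
  WithLp.toLp 2 fun c => ZMod.dft (fun a : ZMod (2 * T) => ((wseq T p v c a.val : ℝ) : ℂ)) k

lemma FF_norm (T p : ℕ) [NeZero T] (v : Fin T → Fin p → ℝ) (k : ZMod (2 * T)) :
    ‖FF T p v k‖ ^ 2 = ∑ c, ‖ZMod.dft (fun a : ZMod (2 * T) =>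
      ((wseq T p v c a.val : ℝ) : ℂ)) k‖ ^ 2 := by
  rw [EuclideanSpace.norm_sq_eq]; rfl

lemma FF_sub (T p : ℕ) [NeZero T] (v w : Fin T → Fin p → ℝ) (k : ZMod (2 * T)) :
    FF T p (v - w) k = FF T p v k - FF T p w k := by
  ext c
  have h : (fun a : ZMod (2 * T) => ((wseq T p (v - w) c a.val : ℝ) : ℂ)) =
      (fun a : ZMod (2 * T) => ((wseq T p v c a.val : ℝ) : ℂ)) -
      (fun a : ZMod (2 * T) => ((wseq T p w c a.val : ℝ) : ℂ)) := by
    funext a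
    simp only [wseq, Pi.sub_apply]
    split_ifs <;> simp
  simp only [FF, PiLp.sub_apply, h, map_sub, Pi.sub_apply]

lemma FF_parseval (T p : ℕ) [NeZero T] (v : Fin T → Fin p → ℝ) :
    ∑ k, ‖FF T p v k‖ ^ 2 = 2 * T * ∑ i, ∑ c, (v i c) ^ 2 := by
  simp only [FF_norm]
  rw [Finset.sum_comm]
  simp only [dft_parseval]
  rw [← Finset.mul_sum, Finset.sum_comm (γ := Fin T)]
  push_cast
  congr 1
  refine Finset.sum_congr rfl fun c _ => ?_
  have h := sum_zmod_val (2 * T) (fun s => (wseq T p v c s) ^ 2)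
  simp only [Complex.norm_real, Real.norm_eq_abs, sq_abs]
  rw [h, two_mul, Finset.sum_range_add]
  have h2 : ∑ x ∈ Finset.range T, wseq T p v c (T + x) ^ 2 = 0 := by
    apply Finset.sum_eq_zero
    intro x _
    simp [wseq]
  rw [h2, add_zero, ← Finset.sum_range_reflect, ← Fin.sum_univ_eq_sum_range
    (fun j => wseq T p v c (T - 1 - j) ^ 2)]
  refine Finset.sum_congr rfl fun j _ => ?_
  have h3 : T - 1 - (j : ℕ) < T := by omega
  have h4 : T - 1 - (T - 1 - (j : ℕ)) = j := by omega
  simp [wseq, h3, h4]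

lemma window (T p : ℕ) [NeZero T] (v : Fin T → Fin p → ℝ) (B : ℝ)
    (hB : ∀ k, ‖FF T p v k‖ ≤ B) (U : Fin p → ℕ → ℝ) :
    ∑ i ∈ Finset.range T, (∑ c, ∑ s ∈ Finset.range T, wseq T p v c s * U c (i + s)) ^ 2 ≤
      B ^ 2 * ∑ c, ∑ t ∈ Finset.range (2 * T), (U c t) ^ 2 := by
  have h := conv_bound p (2 * T) (fun c a => ((wseq T p v c a.val : ℝ) : ℂ))
    (fun c t => ((U c t.val : ℝ) : ℂ)) B (fun k => by
      rw [← FF_norm]; exact pow_le_pow_left₀ (norm_nonneg _) (hB k) 2)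
  have h2 : ∀ c, ∑ t : ZMod (2 * T), ‖((U c t.val : ℝ) : ℂ)‖ ^ 2 =
      ∑ t ∈ Finset.range (2 * T), (U c t) ^ 2 := by
    intro c
    rw [← sum_zmod_val (2 * T) (fun t => (U c t) ^ 2)]
    simp
  simp only [h2] at h
  refine le_trans ?_ h
  set Y : ℕ → ℝ := fun i =>
    ‖∑ c, ∑ a : ZMod (2 * T), ((wseq T p v c a.val : ℝ) : ℂ) *
      ((U c ((i : ZMod (2 * T)) + a).val : ℝ) : ℂ)‖ ^ 2 with hY
  have h3 := sum_zmod_val (2 * T) Y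
  simp only [hY, ZMod.natCast_zmod_val] at h3
  rw [h3]
  refine le_trans (le_of_eq ?_) (Finset.sum_le_sum_of_subset_of_nonneg
    (Finset.range_subset_range.2 (show T ≤ 2 * T by omega)) fun i _ _ => by positivity)
  refine Finset.sum_congr rfl fun i hi => ?_
  have hiT := Finset.mem_range.1 hi
  have h4 : ∀ c, ∑ a : ZMod (2 * T), ((wseq T p v c a.val : ℝ) : ℂ) *
      ((U c ((i : ZMod (2 * T)) + a).val : ℝ) : ℂ) =
      ((∑ s ∈ Finset.range T, wseq T p v c s * U c (i + s) : ℝ) : ℂ) := by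
    intro c
    have h5 : ∀ a : ZMod (2 * T), ((wseq T p v c a.val : ℝ) : ℂ) *
      ((U c ((i : ZMod (2 * T)) + a).val : ℝ) : ℂ) =
        ((wseq T p v c a.val * U c (i + a.val) : ℝ) : ℂ) := by
      intro a
      by_cases ha : a.val < T
      · have hi2 : (i : ZMod (2 * T)).val = i := ZMod.val_cast_of_lt (by omega)
        rw [ZMod.val_add_of_lt (by rw [hi2]; omega), hi2]
        push_cast; rfl
      · simp [wseq, ha]
    rw [Finset.sum_congr rfl fun a _ => h5 a, ← Complex.ofReal_sum,
      sum_zmod_val (2 * T) (fun s => wseq T p v c s * U c (i + s))]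
    congr 1
    rw [two_mul T, Finset.sum_range_add]
    simp [wseq]
  rw [Finset.sum_congr rfl fun c _ => h4 c, ← Complex.ofReal_sum, Complex.norm_real,
    Real.norm_eq_abs, sq_abs]

lemma toep_bound (T p n : ℕ) [NeZero T] (v : Fin T → Fin p → ℝ) (B : ℝ) (hB0 : 0 ≤ B)
    (hB : ∀ k, ‖FF T p v k‖ ≤ B) : opNorm (Toep T p n v) ≤ Real.sqrt 2 * B := by
  have hT : 0 < T := Nat.pos_of_ne_zero (NeZero.ne T)
  refine ContinuousLinearMap.opNorm_le_bound _ (by positivity) fun u => ?_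
  rw [LinearMap.coe_toContinuousLinearMap']
  refine abs_le_of_sq_le_sq' ?_ (by positivity) |>.2
  rw [EuclideanSpace.norm_sq_eq, mul_pow, mul_pow, Real.sq_sqrt (by norm_num),
    EuclideanSpace.norm_sq_eq]
  simp only [Real.norm_eq_abs, sq_abs]
  let U : Fin p → ℕ → ℝ := fun c j => if h : j < n + T - 1 then u (⟨j, h⟩, c) else 0
  let Y : ℕ → ℝ := fun i => (∑ c, ∑ s ∈ Finset.range T, wseq T p v c s * U c (i + s)) ^ 2
  have h1 : ∀ i : Fin n, (Matrix.toEuclideanLin (Toep T p n v) u) i ^ 2 = Y i := by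
    intro i
    rw [toep_row]
  have hn : n ≤ n * T := Nat.le_mul_of_pos_right n hT
  have hY0 : ∀ i, 0 ≤ Y i := fun i => by positivity
  have hU : ∀ c (K : ℕ), ∑ j ∈ Finset.range K, U c j ^ 2 ≤ ∑ j, u (j, c) ^ 2 := by
    intro c K
    have e : ∑ j : Fin (n + T - 1), u (j, c) ^ 2 = ∑ j ∈ Finset.range (n + T - 1), U c j ^ 2 := by
      rw [← Fin.sum_univ_eq_sum_range (fun j => U c j ^ 2)]
      simp [U]
    rw [e]
    rcases le_total K (n + T - 1) with h | h
    · exact Finset.sum_le_sum_of_subset_of_nonneg (Finset.range_subset_range.2 h)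
        fun _ _ _ => sq_nonneg _
    · apply le_of_eq
      symm
      apply Finset.sum_subset (Finset.range_subset_range.2 h)
      intro j _ hj
      simp only [Finset.mem_range] at hj
      simp [U, hj]
  have hU2 : ∀ c, ∑ r ∈ Finset.range n, ∑ t ∈ Finset.range (2 * T), U c (r * T + t) ^ 2 ≤
      2 * ∑ j, u (j, c) ^ 2 := by
    intro c
    simp only [two_mul T, Finset.sum_range_add, Finset.sum_add_distrib]
    have a1 := sum_blocks T n (fun j => U c j ^ 2)
    have a2 := sum_blocks T n (fun j => U c (T + j) ^ 2)
    have a3 : ∑ j ∈ Finset.range (n * T), U c (T + j) ^ 2 ≤ ∑ j, u (j, c) ^ 2 := by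
      refine le_trans ?_ (hU c (T + n * T))
      rw [Finset.sum_range_add]
      exact le_add_of_nonneg_left (Finset.sum_nonneg fun _ _ => sq_nonneg _)
    have a4 := hU c (n * T)
    have a5 : ∀ r t, r * T + (T + t) = T + (r * T + t) := fun r t => by ring
    simp only [a5]
    linarith
  calc ∑ i, (Matrix.toEuclideanLin (Toep T p n v) u) i ^ 2
      = ∑ i ∈ Finset.range n, Y i := by
        rw [Finset.sum_congr rfl fun i _ => h1 i, Fin.sum_univ_eq_sum_range]
    _ ≤ ∑ i ∈ Finset.range (n * T), Y i :=
        Finset.sum_le_sum_of_subset_of_nonneg (Finset.range_subset_range.2 hn) fun i _ _ => hY0 i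
    _ = ∑ r ∈ Finset.range n, ∑ t ∈ Finset.range T, Y (r * T + t) := (sum_blocks _ _ _).symm
    _ ≤ ∑ r ∈ Finset.range n, B ^ 2 * ∑ c, ∑ t ∈ Finset.range (2 * T), U c (r * T + t) ^ 2 := by
        refine Finset.sum_le_sum fun r _ => ?_
        have := window T p v B hB (fun c t => U c (r * T + t))
        simpa [Y, add_assoc] using this
    _ = B ^ 2 * ∑ c, ∑ r ∈ Finset.range n, ∑ t ∈ Finset.range (2 * T), U c (r * T + t) ^ 2 := by
        rw [← Finset.mul_sum, Finset.sum_comm]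
    _ ≤ B ^ 2 * ∑ c, 2 * ∑ j, u (j, c) ^ 2 := by
        gcongr with c _
        exact hU2 c
    _ = 2 * B ^ 2 * ∑ jk, u jk ^ 2 := by
        rw [Fintype.sum_prod_type, Finset.sum_comm, ← Finset.mul_sum]; ring

open Metric MeasureTheory Module in
lemma card_sep {E : Type*} [NormedAddCommGroup E] [NormedSpace ℝ E] [FiniteDimensional ℝ E]
    (R ε : ℝ) (hε : 0 < ε) (hR : ε ≤ R) (s : Finset E) (hs : ∀ c ∈ s, ‖c‖ ≤ R)
    (h : ∀ c ∈ s, ∀ d ∈ s, c ≠ d → ε ≤ ‖c - d‖) :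
    (s.card : ℝ) ≤ (3 * R / ε) ^ finrank ℝ E := by
  borelize E
  let μ : Measure E := Measure.addHaar
  let δ : ℝ := ε / 2
  let ρ : ℝ := 3 * R / 2
  have I0 : 0 < δ := by positivity
  have ρpos : 0 < ρ := by have : 0 < R := by linarith
                          positivity
  set A := ⋃ c ∈ s, ball (c : E) δ with hA
  have D : Set.Pairwise (s : Set E) (Function.onFun Disjoint fun c => ball (c : E) δ) := by
    rintro c hc d hd hcd
    apply ball_disjoint_ball
    rw [dist_eq_norm]
    have := h c hc d hd hcd
    simp only [δ]; linarith
  have A_subset : A ⊆ ball (0 : E) ρ := by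
    refine Set.iUnion₂_subset fun x hx => ?_
    apply ball_subset_ball'
    rw [dist_zero_right]
    have := hs x hx
    simp only [δ, ρ]; linarith
  have I :
    (s.card : ℝ≥0∞) * ENNReal.ofReal (δ ^ finrank ℝ E) * μ (ball 0 1) ≤
      ENNReal.ofReal (ρ ^ finrank ℝ E) * μ (ball 0 1) :=
    calc
      (s.card : ℝ≥0∞) * ENNReal.ofReal (δ ^ finrank ℝ E) * μ (ball 0 1) = μ A := by
        rw [hA, measure_biUnion_finset D fun c _ => measurableSet_ball]
        simp only [μ.addHaar_ball_of_pos _ I0]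
        simp only [Finset.sum_const, nsmul_eq_mul, mul_assoc]
      _ ≤ μ (ball (0 : E) ρ) := measure_mono A_subset
      _ = ENNReal.ofReal (ρ ^ finrank ℝ E) * μ (ball 0 1) := by
        simp only [μ.addHaar_ball_of_pos _ ρpos]
  have J : (s.card : ℝ≥0∞) * ENNReal.ofReal (δ ^ finrank ℝ E) ≤ ENNReal.ofReal (ρ ^ finrank ℝ E) :=
    (ENNReal.mul_le_mul_iff_left (measure_ball_pos _ _ zero_lt_one).ne' measure_ball_lt_top.ne).1 I
  have := ENNReal.toReal_le_of_le_ofReal (pow_nonneg ρpos.le _) J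
  rw [ENNReal.toReal_mul, ENNReal.toReal_natCast, ENNReal.toReal_ofReal (by positivity)] at this
  rw [show 3 * R / ε = ρ / δ by simp only [ρ, δ]; field_simp, div_pow, le_div_iff₀ (by positivity)]
  exact this

open Module in
lemma exists_net {E : Type*} [NormedAddCommGroup E] [NormedSpace ℝ E] [FiniteDimensional ℝ E]
    (R ε : ℝ) (hε : 0 < ε) (hR : ε ≤ R) :
    ∃ s : Finset E, (s.card : ℝ) ≤ (3 * R / ε) ^ finrank ℝ E ∧
      ∀ z : E, ‖z‖ ≤ R → ∃ a ∈ s, ‖z - a‖ ≤ ε := by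
  classical
  let P : ℕ → Prop := fun k => ∃ s : Finset E, s.card = k ∧ (∀ c ∈ s, ‖c‖ ≤ R) ∧
    (∀ c ∈ s, ∀ d ∈ s, c ≠ d → ε ≤ ‖c - d‖)
  have hP0 : P 0 := ⟨∅, by simp⟩
  let b : ℕ := ⌊(3 * R / ε) ^ finrank ℝ E⌋₊
  have hb : ∀ k, P k → k ≤ b := by
    rintro k ⟨s, rfl, h1, h2⟩
    exact Nat.le_floor (card_sep R ε hε hR s h1 h2)
  obtain ⟨s, hs, h1, h2⟩ := Nat.findGreatest_spec (P := P) (Nat.zero_le b) hP0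
  refine ⟨s, card_sep R ε hε hR s h1 h2, fun z hz => ?_⟩
  by_contra! hcon
  have hz' : z ∉ s := fun hzs => by
    have := hcon z hzs
    simp at this; linarith
  have hPn : P (s.card + 1) := by
    refine ⟨insert z s, Finset.card_insert_of_notMem hz', ?_, ?_⟩
    · intro c hc
      rcases Finset.mem_insert.1 hc with rfl | hc
      · exact hz
      · exact h1 c hc
    · intro c hc d hd hcd
      rcases Finset.mem_insert.1 hc with hc1 | hc1 <;>
        rcases Finset.mem_insert.1 hd with hd1 | hd1
      · exact absurd (hc1.trans hd1.symm) hcd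
      · rw [hc1]; exact (hcon d hd1).le
      · rw [hd1, norm_sub_rev]; exact (hcon c hc1).le
      · exact h2 c hc1 d hd1 hcd
  have := Nat.le_findGreatest (hb _ hPn) hPn
  omega

lemma exists_code (M p m Q : ℕ) [NeZero M] (R r : ℝ) (hR : 0 < R) (hr : 0 < r) (hr1 : r ≤ 1)
    (hQ : (3 / r) ^ 2 ≤ Q) {X : Type*} (F : X → ZMod M → EuclideanSpace ℂ (Fin p))
    (hF : ∀ x j, ‖F x j‖ ≤ R)
    (hS : ∀ x, ∃ f : Fin m → ZMod M, ∀ j, R * r < ‖F x j‖ → ∃ i, f i = j) :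
    ∃ (ι : Type) (_ : Fintype ι) (code : X → ι), Fintype.card ι ≤ (M * Q ^ p) ^ m ∧
      ∀ x y, code x = code y → ∀ j, ‖F x j - F y j‖ ≤ 2 * (R * r) := by
  classical
  obtain ⟨s, hs, hnet⟩ := exists_net (E := EuclideanSpace ℂ (Fin p)) R (R * r) (by positivity)
    (by nlinarith)
  have hcard : s.card ≤ Q ^ p := by
    have h1 : Module.finrank ℝ (EuclideanSpace ℂ (Fin p)) = 2 * p := by
      rw [finrank_real_of_complex]; simp
    rw [h1, show 3 * R / (R * r) = 3 / r by field_simp, pow_mul] at hs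
    have : (s.card : ℝ) ≤ (Q : ℝ) ^ p := hs.trans (by gcongr)
    exact_mod_cast this
  choose f hf using hS
  choose a ha ha' using fun (x : X) (j : ZMod M) => hnet (F x j) (hF x j)
  refine ⟨Fin m → ZMod M × s, inferInstance, fun x i => (f x i, ⟨a x (f x i), ha _ _⟩), ?_, ?_⟩
  · simp only [Fintype.card_pi, Fintype.card_prod, ZMod.card, Fintype.card_coe,
      Finset.prod_const, Finset.card_univ, Fintype.card_fin]
    gcongr
  · intro x y hxy
    have key : ∀ i, f x i = f y i ∧ a x (f x i) = a y (f y i) := by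
      intro i
      have := congrFun hxy i
      simpa [Prod.ext_iff] using this
    have close : ∀ i, ‖F x (f x i) - F y (f x i)‖ ≤ 2 * (R * r) := by
      intro i
      have h1 := ha' x (f x i)
      have h2 := ha' y (f y i)
      rw [← (key i).2, ← (key i).1] at h2
      calc _ = ‖(F x (f x i) - a x (f x i)) - (F y (f x i) - a x (f x i))‖ := by congr 1; abel
        _ ≤ _ := (norm_sub_le _ _).trans (by linarith)
    intro j
    by_cases hx : R * r < ‖F x j‖
    · obtain ⟨i, rfl⟩ := hf x j hx
      exact close i
    by_cases hy : R * r < ‖F y j‖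
    · obtain ⟨i, rfl⟩ := hf y j hy
      rw [← (key i).1]
      exact close i
    exact (norm_sub_le _ _).trans (by linarith)

lemma gamma2_le {X : Type*} (d : X → X → ℝ) (δ : ℕ → ℝ)
    (ι : ℕ → Type) [∀ k, Fintype (ι k)] (code : ∀ k, X → ι k)
    (hc : ∀ k, Fintype.card (ι k) ≤ 2 ^ 2 ^ k) (h0 : Subsingleton (ι 0))
    (hd : ∀ k x y, code k x = code k y → d x y ≤ δ k) :
    gamma2 d ≤ ∑' k : ℕ, ENNReal.ofReal (Real.sqrt (2 ^ k) * δ k) := by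
  classical
  let A : ℕ → X → Set X := fun k x => {y | code k y = code k x}
  have hr : ∀ k, Set.range (A k) ⊆ Set.range (fun c : ι k => {y | code k y = c}) := by
    rintro k _ ⟨x, rfl⟩
    exact ⟨code k x, rfl⟩
  have hA : IsAdmissible A := by
    refine ⟨fun n x => rfl, ?_, ?_, ?_⟩
    · intro n x y hy
      have hy' : code n y = code n x := hy
      simp only [A, hy']
    · rintro _ ⟨x, rfl⟩ _ ⟨y, rfl⟩
      simp only [A, Subsingleton.elim (code 0 x) (code 0 y)]
    · intro k
      refine ⟨(Set.finite_range _).subset (hr k), ?_⟩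
      refine le_trans ?_ (hc k)
      refine (Nat.card_mono (Set.finite_range _) (hr k)).trans ?_
      rw [← Nat.card_eq_fintype_card]
      exact Finite.card_range_le _
  refine (iInf₂_le A hA).trans (iSup_le fun x => ?_)
  refine ENNReal.tsum_le_tsum fun k => ?_
  rw [ENNReal.ofReal_mul (Real.sqrt_nonneg _)]
  gcongr
  · apply le_of_eq
    rw [Real.sqrt_eq_rpow, ← Real.rpow_natCast, ← Real.rpow_mul (by norm_num),
      ← ENNReal.ofReal_rpow_of_pos (by norm_num)]
    congr 1
    · simp
    · ring
  · refine iSup₂_le fun y hy => iSup₂_le fun z hz => ENNReal.ofReal_le_ofReal ?_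
    have hy' : code k y = code k x := hy
    have hz' : code k z = code k x := hz
    exact hd k y z (hy'.trans hz'.symm)

lemma exists_enum {α : Type*} [Nonempty α] (S : Finset α) (m : ℕ) (h : S.card ≤ m) :
    ∃ f : Fin m → α, ∀ a ∈ S, ∃ i, f i = a := by
  classical
  refine ⟨fun i => if h : (i : ℕ) < S.card then S.equivFin.symm ⟨i, h⟩ else Classical.arbitrary α,
    fun a ha => ⟨⟨S.equivFin ⟨a, ha⟩, lt_of_lt_of_le (S.equivFin ⟨a, ha⟩).2 h⟩, ?_⟩⟩
  simp

lemma sqrt_geom_le (P : ℕ) : ∑ k ∈ Finset.range P, Real.sqrt (2 ^ k) ≤ 3 * Real.sqrt (2 ^ P) := by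
  induction P with
  | zero => simp
  | succ P ih =>
    rw [Finset.sum_range_succ, pow_succ, Real.sqrt_mul (by positivity)]
    have h : (4 : ℝ) / 3 ≤ Real.sqrt 2 := Real.le_sqrt_of_sq_le (by norm_num)
    nlinarith [Real.sqrt_nonneg (2 ^ P)]

/-- The diameters of the pieces. -/
noncomputable def dl (_T L P k : ℕ) : ℝ :=
  if k < P then 1 else if k < P + L then 1 / Real.sqrt (2 ^ (k - P))
  else (1 / 2) ^ (2 * L * 2 ^ (k - (P + L)))

lemma cube_le (L : ℕ) (hL : 1 ≤ L) : L ^ 3 ≤ 8 * 2 ^ (L - 1) := by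
  obtain ⟨l, rfl⟩ : ∃ l, L = l + 1 := ⟨L - 1, by omega⟩
  simp only [Nat.add_sub_cancel]
  rcases lt_or_ge l 3 with h | h
  · interval_cases l <;> norm_num
  · induction l, h using Nat.le_induction with
    | base => norm_num
    | succ l hl ih =>
      have h1 := ih (by omega)
      have : (l + 1 + 1) ^ 3 ≤ 2 * (l + 1) ^ 3 := by
        nlinarith [Nat.mul_le_mul hl hl, Nat.mul_le_mul (Nat.mul_le_mul hl hl) hl,
          Nat.mul_le_mul_left (l * l) hl]
      rw [pow_succ 2 l]
      linarith

lemma tsum_bound (T L P : ℕ) (hL : 1 ≤ L) (W : ℝ)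
    (hW : Real.sqrt (2 ^ P) * (4 * Real.sqrt T) ≤ W) :
    ∑' k : ℕ, ENNReal.ofReal (Real.sqrt (2 ^ k) * (4 * Real.sqrt T * dl T L P k)) ≤
      ENNReal.ofReal (6 * L * W) := by
  have hW0 : 0 ≤ W := le_trans (by positivity) hW
  have hd0 : ∀ k, 0 ≤ dl T L P k := fun k => by unfold dl; split_ifs <;> positivity
  set g : ℕ → ℝ := fun k => Real.sqrt (2 ^ k) * (4 * Real.sqrt T * dl T L P k) with hg
  have hg0 : ∀ k, 0 ≤ g k := fun k => by have := hd0 k; positivity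
  have early : ∑ k ∈ Finset.range P, g k ≤ 3 * W := by
    calc ∑ k ∈ Finset.range P, g k = (∑ k ∈ Finset.range P, Real.sqrt (2 ^ k)) * (4 * Real.sqrt T) := by
          rw [Finset.sum_mul]
          refine Finset.sum_congr rfl fun k hk => ?_
          simp [hg, dl, Finset.mem_range.1 hk]
      _ ≤ 3 * Real.sqrt (2 ^ P) * (4 * Real.sqrt T) := by gcongr; exact sqrt_geom_le P
      _ ≤ _ := by linarith
  have mid : ∑ j ∈ Finset.range L, g (P + j) ≤ L * W := by
    calc _ ≤ ∑ j ∈ Finset.range L, W := by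
          refine Finset.sum_le_sum fun j hj => ?_
          have hj := Finset.mem_range.1 hj
          refine le_trans (le_of_eq ?_) hW
          have h1 : (0 : ℝ) < Real.sqrt (2 ^ j) := by positivity
          simp only [hg, dl, show ¬ (P + j < P) by omega, show P + j < P + L by omega, if_true,
            if_false, Nat.add_sub_cancel_left]
          rw [pow_add, Real.sqrt_mul (by positivity)]
          field_simp
      _ = _ := by simp
  have late : ∀ i, g (i + (P + L)) ≤ W * (1 / 2) ^ i := by
    intro i
    simp only [hg, dl, show ¬ (i + (P + L) < P) by omega, show ¬ (i + (P + L) < P + L) by omega,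
            if_false, Nat.add_sub_cancel]
    have h1 : i + 1 ≤ 2 ^ i := Nat.lt_two_pow_self
    have h2 : (L + i) + i ≤ 2 * L * 2 ^ i := by nlinarith
    have h3 : Real.sqrt (2 ^ (L + i)) ≤ 2 ^ (L + i) := by
      rw [Real.sqrt_le_left (by positivity)]
      exact le_self_pow₀ (one_le_pow₀ (by norm_num)) (by norm_num)
    have h4 : ((1 : ℝ) / 2) ^ (2 * L * 2 ^ i) ≤ (1 / 2) ^ ((L + i) + i) :=
      pow_le_pow_of_le_one (by norm_num) (by norm_num) h2
    calc _ = (Real.sqrt (2 ^ P) * (4 * Real.sqrt T)) *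
          (Real.sqrt (2 ^ (L + i)) * (1 / 2) ^ (2 * L * 2 ^ i)) := by
          rw [show i + (P + L) = P + (L + i) by ring, pow_add (2 : ℝ) P,
            Real.sqrt_mul (by positivity)]
          ring
      _ ≤ W * (2 ^ (L + i) * (1 / 2) ^ ((L + i) + i)) := by gcongr
      _ = _ := by
          rw [pow_add (1 / 2 : ℝ) (L + i) i, ← mul_assoc (2 ^ (L + i)), ← mul_pow]; norm_num
  have hL' : (1 : ℝ) ≤ L := by exact_mod_cast hL
  rw [← Summable.sum_add_tsum_nat_add' (k := P + L) ENNReal.summable, Finset.sum_range_add]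
  rw [← ENNReal.ofReal_sum_of_nonneg fun k _ => hg0 k,
    ← ENNReal.ofReal_sum_of_nonneg fun k _ => hg0 _]
  have lateS : ∑' i : ℕ, ENNReal.ofReal (g (i + (P + L))) ≤ ENNReal.ofReal (2 * W) := by
    calc _ ≤ ∑' i : ℕ, ENNReal.ofReal (W * (1 / 2) ^ i) :=
          ENNReal.tsum_le_tsum fun i => ENNReal.ofReal_le_ofReal (late i)
      _ = ENNReal.ofReal (∑' i : ℕ, W * (1 / 2) ^ i) := by
          rw [ENNReal.ofReal_tsum_of_nonneg (fun i => by positivity)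
            (summable_geometric_two.mul_left W)]
      _ = _ := by rw [tsum_mul_left, tsum_geometric_two, mul_comm]
  calc _ ≤ ENNReal.ofReal (3 * W) + ENNReal.ofReal (L * W) + ENNReal.ofReal (2 * W) := by
        gcongr
    _ = ENNReal.ofReal (3 * W + L * W + 2 * W) := by
        rw [← ENNReal.ofReal_add (by positivity) (by positivity),
          ← ENNReal.ofReal_add (by positivity) (by positivity)]
    _ ≤ _ := by
        apply ENNReal.ofReal_le_ofReal
        nlinarith

lemma codes (T p L P : ℕ) [NeZero T] (hp : 1 ≤ p) (hL : 1 ≤ L) (hTL : T < 2 ^ L)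
    (hTL' : 2 ^ (L - 1) ≤ T)
    (hP : 32 * p * L ≤ 2 ^ P) (k : ℕ) :
    ∃ (ι : Type) (_ : Fintype ι)
      (code : {v : Fin T → Fin p → ℝ // ∑ i, ∑ k, (v i k) ^ 2 = 1} → ι),
      Fintype.card ι ≤ 2 ^ 2 ^ k ∧ (k = 0 → Subsingleton ι) ∧
      ∀ x y, code x = code y → ∀ j, ‖FF T p x.1 j - FF T p y.1 j‖ ≤
        2 * (Real.sqrt (2 * T) * dl T L P k) := by
  have hT : 0 < T := Nat.pos_of_ne_zero (NeZero.ne T)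
  have hT' : (0 : ℝ) < T := by exact_mod_cast hT
  have hPpos : P ≠ 0 := by
    rintro rfl
    have := Nat.mul_pos hp hL
    nlinarith
  set R := Real.sqrt (2 * T) with hR
  have hR0 : 0 < R := by positivity
  have hR2 : R ^ 2 = 2 * T := Real.sq_sqrt (by positivity)
  have hsum : ∀ x : {v : Fin T → Fin p → ℝ // ∑ i, ∑ k, (v i k) ^ 2 = 1},
      ∑ k, ‖FF T p x.1 k‖ ^ 2 = R ^ 2 := by
    intro x
    rw [FF_parseval, x.2, hR2, mul_one]
  have hF : ∀ (x : {v : Fin T → Fin p → ℝ // ∑ i, ∑ k, (v i k) ^ 2 = 1}) j,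
      ‖FF T p x.1 j‖ ≤ R := by
    intro x j
    refine (abs_le_of_sq_le_sq' ?_ hR0.le).2
    rw [← hsum x]
    exact Finset.single_le_sum (f := fun k => ‖FF T p x.1 k‖ ^ 2) (fun _ _ => by positivity)
      (Finset.mem_univ j)
  have hpL : L ≤ p * L := Nat.le_mul_of_pos_left L hp
  have hpL' : p ≤ p * L := Nat.le_mul_of_pos_right p hL
  have hM : 2 * T ≤ 2 ^ (L + 1) := by rw [pow_succ]; omega
  rcases lt_or_ge k P with hk | hk
  · refine ⟨Unit, inferInstance, fun _ => (), ?_, fun _ => inferInstance, ?_⟩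
    · simpa using Nat.one_le_two_pow
    · intro x y _ j
      simp only [dl, hk, if_true]
      refine (norm_sub_le _ _).trans ?_
      linarith [hF x j, hF y j]
  rcases lt_or_ge k (P + L) with hk2 | hk2
  · obtain ⟨j, rfl⟩ := Nat.exists_eq_add_of_le hk
    have hjL : j < L := by omega
    have hs : (0 : ℝ) < Real.sqrt (2 ^ j) := by positivity
    have hs1 : (1 : ℝ) ≤ Real.sqrt (2 ^ j) := by
      rw [Real.one_le_sqrt]; exact one_le_pow₀ (by norm_num)
    have hs2 : Real.sqrt (2 ^ j) ^ 2 = (2 ^ j : ℝ) := Real.sq_sqrt (by positivity)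
    have hdl : dl T L P (P + j) = 1 / Real.sqrt (2 ^ j) := by
      simp [dl, hjL]
    obtain ⟨ι, hι, code, h1, h2⟩ := exists_code (2 * T) p (2 ^ j) (9 * 2 ^ j) R
      (1 / Real.sqrt (2 ^ j)) hR0 (by positivity) (by rw [div_le_one hs]; exact hs1)
      (by
        rw [div_div_eq_mul_div, div_one, mul_pow, hs2]
        push_cast
        norm_num) (fun x : {v : Fin T → Fin p → ℝ // ∑ i, ∑ k, (v i k) ^ 2 = 1} => FF T p x.1) hF
      (by
        intro x
        classical
        obtain ⟨f, hf⟩ := exists_enum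
          (Finset.univ.filter fun a => R * (1 / Real.sqrt (2 ^ j)) < ‖FF T p x.1 a‖) (2 ^ j) (by
            have h3 : ((Finset.univ.filter fun a =>
                R * (1 / Real.sqrt (2 ^ j)) < ‖FF T p x.1 a‖).card : ℝ) *
                (R * (1 / Real.sqrt (2 ^ j))) ^ 2 ≤ R ^ 2 := by
              rw [← hsum x, ← nsmul_eq_mul]
              refine (Finset.card_nsmul_le_sum _ (fun a => ‖FF T p x.1 a‖ ^ 2) _ ?_).trans
                (Finset.sum_le_sum_of_subset_of_nonneg (Finset.subset_univ _)
                  fun _ _ _ => by positivity)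
              intro a ha
              have := (Finset.mem_filter.1 ha).2
              exact pow_le_pow_left₀ (by positivity) this.le 2
            rw [mul_pow R, div_pow, hs2, one_pow] at h3
            have h4 : ((Finset.univ.filter fun a =>
                R * (1 / Real.sqrt (2 ^ j)) < ‖FF T p x.1 a‖).card : ℝ) ≤ 2 ^ j := by
              have h5 : (0 : ℝ) < R ^ 2 := by positivity
              have h6 : (0 : ℝ) < 2 ^ j := by positivity
              rw [mul_one_div (R ^ 2), ← mul_div_assoc (_ : ℝ) (R ^ 2), div_le_iff₀ h6, mul_comm] at h3
              exact le_of_mul_le_mul_left h3 h5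
            exact_mod_cast h4)
        exact ⟨f, fun a ha => hf a (by simpa using ha)⟩)
    refine ⟨ι, hι, code, h1.trans ?_, fun h => absurd h (by omega), by rw [hdl]; exact h2⟩
    have h9 : 9 * 2 ^ j ≤ 2 ^ (4 + L) := by
      rw [pow_add]
      have := Nat.pow_le_pow_right (show 0 < 2 by norm_num) hjL.le
      omega
    calc (2 * T * (9 * 2 ^ j) ^ p) ^ 2 ^ j
        ≤ (2 ^ (L + 1) * (2 ^ (4 + L)) ^ p) ^ 2 ^ j := by gcongr
      _ = 2 ^ ((L + 1 + (4 + L) * p) * 2 ^ j) := by rw [← pow_mul, ← pow_add, ← pow_mul]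
      _ ≤ 2 ^ 2 ^ (P + j) := by
          apply Nat.pow_le_pow_right (by norm_num)
          rw [pow_add]
          apply Nat.mul_le_mul_right
          nlinarith
  · obtain ⟨i, rfl⟩ := Nat.exists_eq_add_of_le hk2
    set a := 2 * L * 2 ^ i with ha
    have hdl : dl T L P (P + L + i) = (1 / 2) ^ a := by
      simp only [dl, show ¬ (P + L + i < P) by omega, show ¬ (P + L + i < P + L) by omega,
            if_false, Nat.add_sub_cancel_left, ha]
    obtain ⟨ι, hι, code, h1, h2⟩ := exists_code (2 * T) p (2 * T) (9 * 4 ^ a) R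
      ((1 / 2) ^ a) hR0 (by positivity) (pow_le_one₀ (by norm_num) (by norm_num))
      (by
        apply le_of_eq
        push_cast
        rw [one_div, inv_pow, div_inv_eq_mul, mul_pow, ← pow_mul, mul_comm a 2, pow_mul]
        norm_num) (fun x : {v : Fin T → Fin p → ℝ // ∑ i, ∑ k, (v i k) ^ 2 = 1} => FF T p x.1) hF
      (by
        intro x
        obtain ⟨f, hf⟩ := exists_enum (Finset.univ : Finset (ZMod (2 * T))) (2 * T)
          (by simp [ZMod.card])
        exact ⟨f, fun a _ => hf a (Finset.mem_univ a)⟩)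
    refine ⟨ι, hι, code, h1.trans ?_, fun h => absurd h (by omega), by rw [hdl]; exact h2⟩
    have h9 : 9 * 4 ^ a ≤ 2 ^ (4 + 2 * a) := by
      rw [pow_add, pow_mul 2 2 a]
      have : 0 < 4 ^ a := by positivity
      norm_num
    have hi : 1 ≤ 2 ^ i := Nat.one_le_two_pow
    calc (2 * T * (9 * 4 ^ a) ^ p) ^ (2 * T)
        ≤ (2 ^ (L + 1) * (2 ^ (4 + 2 * a)) ^ p) ^ (2 * T) := by gcongr
      _ ≤ (2 ^ (L + 1) * (2 ^ (4 + 2 * a)) ^ p) ^ (2 ^ (L + 1)) :=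
          Nat.pow_le_pow_right (by positivity) hM
      _ = 2 ^ ((L + 1 + (4 + 2 * a) * p) * 2 ^ (L + 1)) := by
          rw [← pow_mul, ← pow_add, ← pow_mul]
      _ ≤ 2 ^ 2 ^ (P + L + i) := by
          apply Nat.pow_le_pow_right (by norm_num)
          have e1 : L + 1 ≤ 2 * (p * L * 2 ^ i) := by nlinarith
          have e2 : 4 * p ≤ 4 * (p * L * 2 ^ i) := by nlinarith
          have e3 : 2 * a * p = 4 * (p * L * 2 ^ i) := by rw [ha]; ring
          have e4 : L + 1 + (4 + 2 * a) * p ≤ 16 * (p * L * 2 ^ i) := by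
            rw [add_mul, e3]; omega
          calc (L + 1 + (4 + 2 * a) * p) * 2 ^ (L + 1)
              ≤ 16 * (p * L * 2 ^ i) * 2 ^ (L + 1) := Nat.mul_le_mul_right _ e4
            _ = (32 * p * L) * (2 ^ L * 2 ^ i) := by ring
            _ ≤ 2 ^ P * (2 ^ L * 2 ^ i) := Nat.mul_le_mul_right _ hP
            _ = _ := by ring

theorem stmt4 :
    ∃ C : ℝ, 0 < C ∧
      ∀ T p n : ℕ, 1 ≤ T → 1 ≤ p → 1 ≤ n →
        gamma2 (fun x y : {v : Fin T → Fin p → ℝ // ∑ i, ∑ k, (v i k) ^ 2 = 1} =>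
            opNorm (Toep T p n (x.1 - y.1))) ≤
          ENNReal.ofReal (C * Real.sqrt ((T : ℝ) * p *
            min (T : ℝ)
              ((Real.log (Real.exp 1 * T * p)) ^ 2 * (Real.log (Real.exp 1 * T)) ^ 2))) := by
  refine ⟨576, by norm_num, fun T p n hT hp _ => ?_⟩
  have : NeZero T := ⟨by omega⟩
  set L := Nat.log 2 T + 1 with hLdef
  have hL : 1 ≤ L := by omega
  have hTL : T < 2 ^ L := Nat.lt_pow_succ_log_self (by norm_num) T
  have hTL' : 2 ^ (L - 1) ≤ T := by
    rw [hLdef, Nat.add_sub_cancel]; exact Nat.pow_log_le_self 2 (by omega)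
  set P := Nat.clog 2 (32 * p * L) with hPdef
  have hpL : 0 < p * L := Nat.mul_pos hp hL
  have hP : 32 * p * L ≤ 2 ^ P := Nat.le_pow_clog (by norm_num) _
  have hP2 : 2 ^ P ≤ 64 * (p * L) := by
    have h1 := Nat.pow_pred_clog_lt_self (b := 2) (by norm_num) (x := 32 * p * L) (by nlinarith)
    rw [← hPdef] at h1
    have h2 : P ≠ 0 := by
      intro h0
      rw [h0] at hP
      nlinarith
    obtain ⟨q, hq⟩ := Nat.exists_eq_succ_of_ne_zero h2
    rw [hq] at h1 ⊢
    simp only [Nat.succ_eq_add_one, Nat.pred_succ, pow_succ] at *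
    nlinarith
  have hT' : (1 : ℝ) ≤ T := by exact_mod_cast hT
  have hp' : (1 : ℝ) ≤ p := by exact_mod_cast hp
  have hL' : (1 : ℝ) ≤ L := by exact_mod_cast hL
  choose ι hι code hcard hsub hdist using codes T p L P hp hL hTL hTL' hP
  have hd0 : ∀ k, 0 ≤ dl T L P k := fun k => by unfold dl; split_ifs <;> positivity
  refine (gamma2_le _ (fun k => 4 * Real.sqrt T * dl T L P k) ι code hcard (hsub 0 rfl) ?_).trans ?_
  · intro k x y hxy
    have h1 := toep_bound T p n (x.1 - y.1) (2 * (Real.sqrt (2 * T) * dl T L P k))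
      (by have := hd0 k; positivity) (fun j => by rw [FF_sub]; exact hdist k x y hxy j)
    refine h1.trans (le_of_eq ?_)
    rw [Real.sqrt_mul (by norm_num)]
    have : Real.sqrt 2 * Real.sqrt 2 = 2 := Real.mul_self_sqrt (by norm_num)
    linear_combination (2 * Real.sqrt T * dl T L P k) * this
  refine (tsum_bound T L P hL (32 * Real.sqrt (T * (p * L))) ?_).trans ?_
  · have h1 : Real.sqrt (2 ^ P) ≤ 8 * Real.sqrt (p * L) := by
      rw [show (8 : ℝ) = Real.sqrt 64 by
        rw [show (64 : ℝ) = 8 ^ 2 by norm_num, Real.sqrt_sq (by norm_num)],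
        ← Real.sqrt_mul (by norm_num)]
      apply Real.sqrt_le_sqrt
      exact_mod_cast hP2
    rw [Real.sqrt_mul (by positivity)]
    calc _ ≤ 8 * Real.sqrt (p * L) * (4 * Real.sqrt T) := by gcongr
      _ = _ := by ring
  apply ENNReal.ofReal_le_ofReal
  set a := Real.log (Real.exp 1 * T) with ha
  set b := Real.log (Real.exp 1 * T * p) with hb
  have ha1 : a = 1 + Real.log T := by
    rw [ha, Real.log_mul (by positivity) (by positivity), Real.log_exp]
  have hlogT : 0 ≤ Real.log T := Real.log_nonneg hT'
  have hab : a ≤ b := Real.log_le_log (by positivity) (by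
    nlinarith [mul_pos (Real.exp_pos 1) (show (0 : ℝ) < T by positivity)])
  have hLa : (L : ℝ) ≤ 2 * a := by
    have h1 : ((2 : ℝ) ^ (L - 1)) ≤ T := by exact_mod_cast hTL'
    have h2 := Real.log_le_log (by positivity) h1
    rw [Real.log_pow, Nat.cast_sub hL] at h2
    push_cast at h2
    have := Real.log_two_gt_d9
    nlinarith
  have hL3 : (L : ℝ) ^ 3 ≤ 8 * T := by
    have h1 := cube_le L hL
    have h2 : L ^ 3 ≤ 8 * T := by omega
    exact_mod_cast h2
  have hL3' : (L : ℝ) ^ 3 ≤ 8 * (b ^ 2 * a ^ 2) := by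
    have ha1' : 1 ≤ a := by linarith
    calc (L : ℝ) ^ 3 ≤ (2 * a) ^ 3 := by gcongr
      _ = 8 * (a * a ^ 2) := by ring
      _ ≤ 8 * (b ^ 2 * a ^ 2) := by
          gcongr
          nlinarith
  have hmin : (L : ℝ) ^ 3 ≤ 8 * min (T : ℝ) (b ^ 2 * a ^ 2) := by
    rw [mul_min_of_nonneg _ _ (by norm_num)]
    exact le_min hL3 hL3'
  calc 6 * (L : ℝ) * (32 * Real.sqrt (T * (p * L)))
      = 192 * Real.sqrt (T * p * L ^ 3) := by
        rw [show (T : ℝ) * p * L ^ 3 = L ^ 2 * (T * (p * L)) by ring,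
          Real.sqrt_mul (x := (L : ℝ) ^ 2) (by positivity) (T * (p * L) : ℝ), Real.sqrt_sq (by positivity)]
        ring
    _ ≤ 192 * Real.sqrt (9 * (T * p * min (T : ℝ) (b ^ 2 * a ^ 2))) := by
        refine mul_le_mul_of_nonneg_left (Real.sqrt_le_sqrt ?_) (by norm_num)
        have h0 : (0 : ℝ) ≤ T * p := by positivity
        have h1 : 0 ≤ min (T : ℝ) (b ^ 2 * a ^ 2) := by positivity
        nlinarith [mul_le_mul_of_nonneg_left hmin h0, mul_nonneg h0 h1]
    _ = _ := by
        rw [Real.sqrt_mul (by norm_num), show (9 : ℝ) = 3 ^ 2 by norm_num,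
          Real.sqrt_sq (by norm_num)]
        ring
end

section
/- For all integers T, p, n ≥ 1 and every v̄ = (v₁, …, v_T) ∈ (ℝ^p)^T, the banded block-Toeplitz matrix Toep_{T,n}(v̄) satisfies ‖v̄‖₂ ≤ ‖Toep_{T,n}(v̄)‖_op ≤ √T · ‖v̄‖₂, where ‖v̄‖₂ = (Σ_{i=1}^T ‖v_i‖₂²)^{1/2}. -/
lemma Toep_row (T p n : ℕ) (v : Fin T → Fin p → ℝ) (i : Fin n) :
    ∑ jk, (Toep T p n v i jk) ^ 2 = ∑ t, ∑ k, (v t k) ^ 2 := by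
  rw [Fintype.sum_prod_type]
  symm
  apply Fintype.sum_of_injective
    (fun t : Fin T => (⟨i + (T - 1 - t), by omega⟩ : Fin (n + T - 1)))
  · intro a b h
    simp only [Fin.mk.injEq] at h
    ext
    omega
  · intro j hj
    apply Finset.sum_eq_zero
    intro k _
    simp only [Toep, Matrix.of_apply]
    rw [dif_neg]
    · simp
    · rintro ⟨h1, h2, h3⟩
      apply hj
      refine ⟨⟨T - 1 - (j - i), h3⟩, ?_⟩
      ext
      simp only at *
      omega
  · intro t
    apply Finset.sum_congr rfl
    intro k _
    simp only [Toep, Matrix.of_apply]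
    have ht := t.2
    rw [dif_pos (by refine ⟨?_, ?_, ?_⟩ <;> omega)]
    congr 3
    ext
    simp only
    omega

lemma band_card (T n j : ℕ) :
    ((Finset.univ.filter fun i : Fin n => (i : ℕ) ≤ j ∧ j - i < T).card : ℝ) ≤ T := by
  have : (Finset.univ.filter fun i : Fin n => (i : ℕ) ≤ j ∧ j - i < T).card
      ≤ (Finset.range T).card := by
    apply Finset.card_le_card_of_injOn (fun i : Fin n => j - (i : ℕ))
    · intro i hi
      simp at hi ⊢
      exact hi.2
    · intro a ha b hb h
      simp at ha hb h
      ext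
      omega
  rw [Finset.card_range] at this
  exact_mod_cast this

lemma Toep_mul (T p n : ℕ) (v : Fin T → Fin p → ℝ) (x : Fin (n + T - 1) × Fin p → ℝ) :
    ∑ i, (∑ jk, Toep T p n v i jk * x jk) ^ 2
      ≤ T * (∑ t, ∑ k, (v t k) ^ 2) * ∑ jk, x jk ^ 2 := by
  set S := ∑ t, ∑ k, (v t k) ^ 2 with hS
  have hS0 : 0 ≤ S := by positivity
  have key : ∀ i : Fin n, (∑ jk, Toep T p n v i jk * x jk) ^ 2 ≤
      S * ∑ jk, if (i : ℕ) ≤ (jk.1 : ℕ) ∧ (jk.1 : ℕ) - i < T then x jk ^ 2 else 0 := by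
    intro i
    have h := Finset.sum_mul_sq_le_sq_mul_sq Finset.univ (Toep T p n v i)
      (fun jk => if (i : ℕ) ≤ (jk.1 : ℕ) ∧ (jk.1 : ℕ) - i < T then x jk else 0)
    rw [Toep_row, ← hS] at h
    refine le_trans (le_of_eq ?_) (h.trans (le_of_eq ?_))
    · congr 1
      apply Finset.sum_congr rfl
      intro jk _
      split_ifs with hb
      · rfl
      · simp only [Toep, Matrix.of_apply]
        rw [dif_neg (fun h => hb ⟨h.1, h.2.1⟩)]
        simp
    · congr 1
      apply Finset.sum_congr rfl
      intro jk _
      split_ifs <;> simp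
  calc _ ≤ ∑ i : Fin n, S * ∑ jk : Fin (n + T - 1) × Fin p,
          (if (i : ℕ) ≤ (jk.1 : ℕ) ∧ (jk.1 : ℕ) - i < T then x jk ^ 2 else 0) :=
        Finset.sum_le_sum fun i _ => key i
    _ = S * ∑ jk : Fin (n + T - 1) × Fin p, ∑ i : Fin n,
          (if (i : ℕ) ≤ (jk.1 : ℕ) ∧ (jk.1 : ℕ) - i < T then x jk ^ 2 else 0) := by
        rw [← Finset.mul_sum, Finset.sum_comm]
    _ ≤ S * ∑ jk : Fin (n + T - 1) × Fin p, T * x jk ^ 2 := by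
        apply mul_le_mul_of_nonneg_left _ hS0
        apply Finset.sum_le_sum
        intro jk _
        rw [← Finset.sum_filter, Finset.sum_const, nsmul_eq_mul]
        exact mul_le_mul_of_nonneg_right (band_card T n jk.1) (sq_nonneg _)
    _ = _ := by rw [← Finset.mul_sum]; ring

theorem stmt5 (T p n : ℕ) (hT : 1 ≤ T) (hp : 1 ≤ p) (hn : 1 ≤ n)
    (v : Fin T → Fin p → ℝ) :
    Real.sqrt (∑ i, ∑ k, (v i k) ^ 2) ≤ opNorm (Toep T p n v) ∧
    opNorm (Toep T p n v) ≤ Real.sqrt T * Real.sqrt (∑ i, ∑ k, (v i k) ^ 2) := by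
  have hS0 : 0 ≤ ∑ i, ∑ k, (v i k) ^ 2 := by positivity
  have happ : ∀ (x : EuclideanSpace ℝ (Fin (n + T - 1) × Fin p)) (i : Fin n),
      (LinearMap.toContinuousLinearMap (Matrix.toEuclideanLin (Toep T p n v)) x) i
        = ∑ jk, Toep T p n v i jk * x jk := by
    intro x i
    rfl
  constructor
  · set i0 : Fin n := ⟨0, hn⟩
    set x : EuclideanSpace ℝ (Fin (n + T - 1) × Fin p) :=
      WithLp.toLp 2 (Toep T p n v i0) with hx
    have hxn : ‖x‖ = Real.sqrt (∑ i, ∑ k, (v i k) ^ 2) := by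
      rw [EuclideanSpace.norm_eq, ← Toep_row T p n v i0]
      simp [hx]
    have h1 := (LinearMap.toContinuousLinearMap
      (Matrix.toEuclideanLin (Toep T p n v))).le_opNorm x
    have h2 := PiLp.norm_apply_le (LinearMap.toContinuousLinearMap
      (Matrix.toEuclideanLin (Toep T p n v)) x) i0
    have h3 : ∑ jk, Toep T p n v i0 jk * x jk = ∑ i, ∑ k, (v i k) ^ 2 := by
      rw [← Toep_row T p n v i0]
      exact Finset.sum_congr rfl fun jk _ => (sq _).symm
    rw [happ, h3, Real.norm_of_nonneg hS0] at h2
    rw [hxn] at h1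
    have h4 := h2.trans h1
    change _ ≤ opNorm (Toep T p n v) * _ at h4
    have h5 : 0 ≤ opNorm (Toep T p n v) := norm_nonneg _
    rcases (Real.sqrt_nonneg (∑ i, ∑ k, (v i k) ^ 2)).eq_or_lt with h | h
    · rw [← h]; exact h5
    · refine le_of_mul_le_mul_right ?_ h
      rwa [Real.mul_self_sqrt hS0]
  · apply ContinuousLinearMap.opNorm_le_bound _ (by positivity)
    intro x
    rw [EuclideanSpace.norm_eq, EuclideanSpace.norm_eq, ← Real.sqrt_mul (by positivity),
      ← Real.sqrt_mul (by positivity)]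
    apply Real.sqrt_le_sqrt
    simp only [Real.norm_eq_abs, sq_abs, happ]
    exact Toep_mul T p n v x
end

section
/- Let Z be a real-valued random variable, let C, D > 0 be constants, and let M be a nonnegative random variable (on the same probability space) such that for every κ > 0 and every δ ∈ (0,1), P[ Z ≥ C·(κ + M)·√( log(1/δ) + D + log(1 + M/κ) ) ] ≤ δ. Then for every β > 0, every κ > 0, and every δ ∈ (0,1), P[ Z ≥ C·((1+β)·M + κ)·√( log(2/δ) + 2·lil(β·M/κ) + D + log(1 + e/β) ) ] ≤ δ, where lil(x) := log₊(log₊(x)) and log₊(x) := max{1, log x}. -/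
open MeasureTheory

/-- `log₊ x = max{1, log x}`. -/
noncomputable def logplus (x : ℝ) : ℝ := max 1 (Real.log x)

/-- `lil x = log₊(log₊ x)`. -/
noncomputable def lil (x : ℝ) : ℝ := logplus (logplus x)

/-- The weights of the union bound over the grid. -/
noncomputable def lilWeight (n : ℕ) : ℝ := 1 / (n : ℝ) ^ 2 + if n = 0 then 1 / 4 else 0

theorem lilWeight_hasSum : HasSum lilWeight (Real.pi ^ 2 / 6 + 1 / 4) :=
  hasSum_zeta_two.add (hasSum_ite_eq 0 (1 / 4 : ℝ))

theorem lilWeight_pos (n : ℕ) : 0 < lilWeight n := by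
  unfold lilWeight
  rcases Nat.eq_zero_or_pos n with rfl | hn
  · norm_num
  · have : n ≠ 0 := by omega
    have h1 : (0 : ℝ) < n := by exact_mod_cast hn
    simp only [this, if_false]
    positivity

theorem lilWeight_le_one (n : ℕ) : lilWeight n ≤ 1 := by
  unfold lilWeight
  rcases Nat.eq_zero_or_pos n with rfl | hn
  · norm_num
  · have : n ≠ 0 := by omega
    have h1 : (1 : ℝ) ≤ n := by exact_mod_cast hn
    simp only [this, if_false, add_zero]
    rw [div_le_one (by positivity)]
    nlinarith

theorem one_le_lil (x : ℝ) : 1 ≤ lil x := le_max_left _ _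

/-- Choice of the grid point. -/
theorem lil_grid (x : ℝ) (hx : 0 ≤ x) : ∃ n : ℕ,
    x ≤ Real.exp 1 * Real.exp n ∧ (n = 0 ∨ Real.exp n ≤ x) ∧
    -Real.log (lilWeight n) ≤ 2 * lil x := by
  by_cases hxe : x ≤ Real.exp 1
  · refine ⟨0, by simpa using hxe, Or.inl rfl, ?_⟩
    have h1 := one_le_lil x
    have h2 : lilWeight 0 = (2 ^ 2)⁻¹ := by norm_num [lilWeight]
    rw [h2, Real.log_inv, Real.log_pow]
    have := Real.log_two_lt_d9
    push_cast
    linarith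
  · push Not at hxe
    have hx0 : 0 < x := (Real.exp_pos 1).trans hxe
    have hl : 1 < Real.log x := (Real.lt_log_iff_exp_lt hx0).2 hxe
    have hn1 : 1 ≤ ⌊Real.log x⌋₊ := Nat.le_floor (by exact_mod_cast hl.le)
    have hfl : (⌊Real.log x⌋₊ : ℝ) ≤ Real.log x := Nat.floor_le (by linarith)
    have hlt : Real.log x < ⌊Real.log x⌋₊ + 1 := Nat.lt_floor_add_one _
    refine ⟨⌊Real.log x⌋₊, ?_, Or.inr ?_, ?_⟩
    · rw [← Real.exp_add, ← Real.log_le_iff_le_exp hx0]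
      linarith
    · exact (Real.le_log_iff_exp_le hx0).1 hfl
    · generalize ⌊Real.log x⌋₊ = n at *
      have h0 : n ≠ 0 := by omega
      have hnp : (0 : ℝ) < n := by exact_mod_cast hn1
      have h2 : lilWeight n = ((n : ℝ) ^ 2)⁻¹ := by simp [lilWeight, h0]
      rw [h2, Real.log_inv, Real.log_pow]
      have h3 : Real.log n ≤ lil x :=
        (Real.log_le_log hnp (hfl.trans (le_max_right 1 _))).trans (le_max_right _ _)
      push_cast
      linarith

/-- The iterated-logarithm conversion lemma. -/
theorem stmt7 {Ω : Type} {m0 : MeasurableSpace Ω} (μ : Measure Ω) [IsProbabilityMeasure μ]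
    (Z M : Ω → ℝ) (hZm : Measurable Z) (hMm : Measurable M) (hM : ∀ ω, 0 ≤ M ω)
    (C D : ℝ) (hC : 0 < C) (hD : 0 < D)
    (h : ∀ κ : ℝ, 0 < κ → ∀ δ : ℝ, 0 < δ → δ < 1 →
      μ {ω | C * (κ + M ω) *
          Real.sqrt (Real.log (1 / δ) + D + Real.log (1 + M ω / κ)) ≤ Z ω} ≤
        ENNReal.ofReal δ) :
    ∀ β : ℝ, 0 < β → ∀ κ : ℝ, 0 < κ → ∀ δ : ℝ, 0 < δ → δ < 1 →
      μ {ω | C * ((1 + β) * M ω + κ) *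
          Real.sqrt (Real.log (2 / δ) + 2 * lil (β * M ω / κ) + D +
            Real.log (1 + Real.exp 1 / β)) ≤ Z ω} ≤
        ENNReal.ofReal δ := by
  intro β hβ κ hκ δ hδ hδ1
  have hsub : {ω | C * ((1 + β) * M ω + κ) *
          Real.sqrt (Real.log (2 / δ) + 2 * lil (β * M ω / κ) + D +
            Real.log (1 + Real.exp 1 / β)) ≤ Z ω} ⊆
      ⋃ n : ℕ, {ω | C * (κ * Real.exp n + M ω) *
          Real.sqrt (Real.log (1 / (δ / 2 * lilWeight n)) + D +
            Real.log (1 + M ω / (κ * Real.exp n))) ≤ Z ω} := by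
    intro ω hω
    simp only [Set.mem_setOf_eq, Set.mem_iUnion] at hω ⊢
    have hMω := hM ω
    obtain ⟨n, h1, h2, h3⟩ := lil_grid (β * M ω / κ) (by positivity)
    refine ⟨n, le_trans ?_ hω⟩
    have hw := lilWeight_pos n
    have hA : κ * Real.exp n + M ω ≤ (1 + β) * M ω + κ := by
      rcases h2 with rfl | h2
      · have := mul_nonneg hβ.le hMω
        simp
        linarith
      · rw [le_div_iff₀ hκ] at h2
        linarith
    have hB : M ω / (κ * Real.exp n) ≤ Real.exp 1 / β := by
      rw [div_le_iff₀ hκ] at h1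
      rw [div_le_div_iff₀ (by positivity) hβ]
      linarith
    have hL : Real.log (1 / (δ / 2 * lilWeight n)) ≤
        Real.log (2 / δ) + 2 * lil (β * M ω / κ) := by
      have : 1 / (δ / 2 * lilWeight n) = (2 / δ) * (lilWeight n)⁻¹ := by
        field_simp
      rw [this, Real.log_mul (by positivity) (by positivity), Real.log_inv]
      linarith
    have hlog : Real.log (1 + M ω / (κ * Real.exp n)) ≤ Real.log (1 + Real.exp 1 / β) :=
      Real.log_le_log (by positivity) (by linarith)
    gcongr
  have hsum := lilWeight_hasSum.mul_left (δ / 2)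
  refine (measure_mono hsub).trans ((measure_iUnion_le _).trans ?_)
  calc _ ≤ ∑' n : ℕ, ENNReal.ofReal (δ / 2 * lilWeight n) := by
        refine ENNReal.tsum_le_tsum fun n => h _ (by positivity) _ ?_ ?_
        · have := lilWeight_pos n
          positivity
        · have := lilWeight_le_one n
          nlinarith
    _ = ENNReal.ofReal (δ / 2 * (Real.pi ^ 2 / 6 + 1 / 4)) := by
        rw [← hsum.tsum_eq, ENNReal.ofReal_tsum_of_nonneg _ hsum.summable]
        intro n
        have := lilWeight_pos n
        positivity
    _ ≤ ENNReal.ofReal δ := by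
        apply ENNReal.ofReal_le_ofReal
        have h1 := Real.pi_lt_d2
        have h2 := Real.pi_pos
        have h3 : Real.pi ^ 2 / 6 + 1 / 4 ≤ 2 := by nlinarith
        nlinarith
end

section
/- Let Ñ, L̄, m ≥ 1, let K ∈ ℝ^{Ñ×L̄}, let μ > 0, and for A ∈ ℝ^{Ñ×m} define ridge(A, μ) ∈ ℝ^{m×L̄} by ridge(A, μ)ᵀ := (KᵀK + μ²I_{L̄})^{−1}·Kᵀ·A. Then: (a) ridge(A, μ) is the unique minimizer over φ ∈ ℝ^{m×L̄} of the strictly convex objective ‖Kφᵀ − A‖_F² + μ²·‖φ‖_F² (in particular A ↦ ridge(A, μ) is linear in A); and (b) ridge(A, μ) minimizes over φ ∈ ℝ^{m×L̄} the operator norm ‖ vcat(Kφᵀ − A, μφᵀ) ‖_op of the vertical concatenation of Kφᵀ − A ∈ ℝ^{Ñ×m} and μφᵀ ∈ ℝ^{L̄×m}. -/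
open Matrix

/-- Squared Frobenius norm. -/
def frobSq {α β : Type*} [Fintype α] [Fintype β] (A : Matrix α β ℝ) : ℝ :=
  ∑ i, ∑ j, (A i j) ^ 2

/-- The ridge estimator `ridge(A, μ)ᵀ = (KᵀK + μ²I)⁻¹ Kᵀ A`. -/
noncomputable def ridge {Nt L m : ℕ} (K : Matrix (Fin Nt) (Fin L) ℝ) (μ : ℝ)
    (A : Matrix (Fin Nt) (Fin m) ℝ) : Matrix (Fin m) (Fin L) ℝ :=
  ((Kᵀ * K + μ ^ 2 • (1 : Matrix (Fin L) (Fin L) ℝ))⁻¹ * Kᵀ * A)ᵀ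

lemma frobSq_eq_trace {α β : Type*} [Fintype α] [Fintype β] (X : Matrix α β ℝ) :
    frobSq X = (Xᵀ * X).trace := by
  simp only [frobSq, Matrix.trace, Matrix.diag, Matrix.mul_apply, Matrix.transpose_apply]
  rw [Finset.sum_comm]
  simp only [sq]

lemma frobSq_transpose' {α β : Type*} [Fintype α] [Fintype β] (X : Matrix α β ℝ) :
    frobSq Xᵀ = frobSq X := by
  simp only [frobSq, Matrix.transpose_apply]
  rw [Finset.sum_comm]

lemma frobSq_nonneg' {α β : Type*} [Fintype α] [Fintype β] (X : Matrix α β ℝ) :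
    0 ≤ frobSq X := by
  unfold frobSq; positivity

lemma frobSq_eq_zero' {α β : Type*} [Fintype α] [Fintype β] (X : Matrix α β ℝ)
    (h : frobSq X = 0) : X = 0 := by
  unfold frobSq at h
  ext i j
  rw [Finset.sum_eq_zero_iff_of_nonneg (fun i _ => by positivity)] at h
  have h1 := h i (Finset.mem_univ _)
  rw [Finset.sum_eq_zero_iff_of_nonneg (fun i _ => by positivity)] at h1
  simpa using h1 j (Finset.mem_univ _)

lemma ridge_normal {Nt L m : ℕ} (K : Matrix (Fin Nt) (Fin L) ℝ) (μ : ℝ) (hμ : 0 < μ)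
    (A : Matrix (Fin Nt) (Fin m) ℝ) :
    Kᵀ * (K * (ridge K μ A)ᵀ - A) + μ ^ 2 • (ridge K μ A)ᵀ = 0 := by
  have hpd : (Kᵀ * K + μ ^ 2 • (1 : Matrix (Fin L) (Fin L) ℝ)).PosDef := by
    refine Matrix.PosDef.posSemidef_add ?_ ?_
    · simpa using Matrix.posSemidef_conjTranspose_mul_self K
    · exact Matrix.PosDef.one.smul (by positivity)
  have hu := (Matrix.isUnit_iff_isUnit_det _).1 hpd.isUnit
  have h : (Kᵀ * K + μ ^ 2 • (1 : Matrix (Fin L) (Fin L) ℝ)) * (ridge K μ A)ᵀ = Kᵀ * A := by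
    rw [ridge, Matrix.transpose_transpose, Matrix.mul_assoc _ Kᵀ A,
      Matrix.mul_nonsing_inv_cancel_left _ _ hu]
  rw [Matrix.add_mul, Matrix.smul_mul, Matrix.one_mul] at h
  rw [Matrix.mul_sub, ← Matrix.mul_assoc, ← h]
  abel

lemma gram_identity {Nt L m : ℕ} (K : Matrix (Fin Nt) (Fin L) ℝ) (μ : ℝ)
    (A : Matrix (Fin Nt) (Fin m) ℝ) (R D : Matrix (Fin L) (Fin m) ℝ)
    (h : Kᵀ * (K * R - A) + μ ^ 2 • R = 0) :
    (K * (R + D) - A)ᵀ * (K * (R + D) - A) + μ ^ 2 • ((R + D)ᵀ * (R + D)) =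
      ((K * R - A)ᵀ * (K * R - A) + μ ^ 2 • (Rᵀ * R)) +
        ((K * D)ᵀ * (K * D) + μ ^ 2 • (Dᵀ * D)) := by
  have e : K * (R + D) - A = (K * R - A) + K * D := by rw [Matrix.mul_add]; abel
  rw [e]
  generalize K * R - A = E at *
  have h1 : Dᵀ * (Kᵀ * E) + μ ^ 2 • (Dᵀ * R) = 0 := by
    have := congrArg (fun X => Dᵀ * X) h
    simpa [Matrix.mul_add] using this
  have h2 : Eᵀ * (K * D) + μ ^ 2 • (Rᵀ * D) = 0 := by
    have := congrArg Matrix.transpose h1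
    simpa [Matrix.mul_assoc] using this
  simp only [Matrix.transpose_add, Matrix.transpose_mul, Matrix.add_mul, Matrix.mul_add, smul_add,
    Matrix.mul_assoc] at *
  rw [← sub_eq_zero]
  calc _ = (Dᵀ * (Kᵀ * E) + μ ^ 2 • (Dᵀ * R)) + (Eᵀ * (K * D) + μ ^ 2 • (Rᵀ * D)) := by abel
    _ = 0 := by rw [h1, h2, add_zero]

lemma frob_identity {Nt L m : ℕ} (K : Matrix (Fin Nt) (Fin L) ℝ) (μ : ℝ) (hμ : 0 < μ)
    (A : Matrix (Fin Nt) (Fin m) ℝ) (φ : Matrix (Fin m) (Fin L) ℝ) :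
    frobSq (K * φᵀ - A) + μ ^ 2 * frobSq φ =
      frobSq (K * (ridge K μ A)ᵀ - A) + μ ^ 2 * frobSq (ridge K μ A) +
      (frobSq (K * (φ - ridge K μ A)ᵀ) + μ ^ 2 * frobSq (φ - ridge K μ A)) := by
  have h := congrArg Matrix.trace (gram_identity K μ A (ridge K μ A)ᵀ (φ - ridge K μ A)ᵀ
    (ridge_normal K μ hμ A))
  have e : (ridge K μ A)ᵀ + (φ - ridge K μ A)ᵀ = φᵀ := by
    rw [← Matrix.transpose_add]; simp
  rw [e] at h
  simp only [Matrix.trace_add, Matrix.trace_smul, ← frobSq_eq_trace, frobSq_transpose',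
    smul_eq_mul] at h
  exact h

lemma norm_sq_fromRows {Nt L m : ℕ} (X : Matrix (Fin Nt) (Fin m) ℝ) (μ : ℝ)
    (Y : Matrix (Fin L) (Fin m) ℝ) (v : EuclideanSpace ℝ (Fin m)) :
    ‖Matrix.toEuclideanLin (Matrix.fromRows X (μ • Y)) v‖ ^ 2 =
      v.ofLp ⬝ᵥ ((Xᵀ * X + μ ^ 2 • (Yᵀ * Y)) *ᵥ v.ofLp) := by
  rw [EuclideanSpace.norm_sq_eq]
  have key : ∀ {n : ℕ} (Z : Matrix (Fin n) (Fin m) ℝ) (w : Fin m → ℝ),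
      w ⬝ᵥ ((Zᵀ * Z) *ᵥ w) = ∑ i, ((Z *ᵥ w) i) ^ 2 := by
    intro n Z w
    rw [← Matrix.mulVec_mulVec, Matrix.dotProduct_mulVec, Matrix.vecMul_transpose]
    simp [dotProduct, sq]
  rw [Matrix.add_mulVec, dotProduct_add, Matrix.smul_mulVec, dotProduct_smul, key, key]
  simp [Fintype.sum_sum_type, Matrix.toEuclideanLin_apply, Matrix.fromRows_mulVec,
    Matrix.smul_mulVec, mul_pow, Finset.mul_sum]

theorem stmt8 {Nt L m : ℕ} (hNt : 1 ≤ Nt) (hL : 1 ≤ L) (hm : 1 ≤ m)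
    (K : Matrix (Fin Nt) (Fin L) ℝ) (μ : ℝ) (hμ : 0 < μ) (A : Matrix (Fin Nt) (Fin m) ℝ) :
    -- (a) `ridge K μ A` is the unique minimizer of the Frobenius objective ...
    (∀ φ : Matrix (Fin m) (Fin L) ℝ,
        frobSq (K * (ridge K μ A)ᵀ - A) + μ ^ 2 * frobSq (ridge K μ A) ≤
          frobSq (K * φᵀ - A) + μ ^ 2 * frobSq φ) ∧
    (∀ φ : Matrix (Fin m) (Fin L) ℝ,
        frobSq (K * φᵀ - A) + μ ^ 2 * frobSq φ =
          frobSq (K * (ridge K μ A)ᵀ - A) + μ ^ 2 * frobSq (ridge K μ A) →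
        φ = ridge K μ A) ∧
    -- ... and in particular `A ↦ ridge(A, μ)` is linear in `A` ...
    (∀ A₁ A₂ : Matrix (Fin Nt) (Fin m) ℝ, ridge K μ (A₁ + A₂) = ridge K μ A₁ + ridge K μ A₂) ∧
    (∀ (c : ℝ) (A' : Matrix (Fin Nt) (Fin m) ℝ), ridge K μ (c • A') = c • ridge K μ A') ∧
    -- (b) `ridge K μ A` minimizes the operator norm of the vertical concatenation
    (∀ φ : Matrix (Fin m) (Fin L) ℝ,
        opNorm (Matrix.fromRows (K * (ridge K μ A)ᵀ - A) (μ • (ridge K μ A)ᵀ)) ≤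
          opNorm (Matrix.fromRows (K * φᵀ - A) (μ • φᵀ))) := by
  refine ⟨fun φ => ?_, fun φ h => ?_, fun A₁ A₂ => ?_, fun c A' => ?_, fun φ => ?_⟩
  · rw [frob_identity K μ hμ A φ]
    have h1 := frobSq_nonneg' (K * (φ - ridge K μ A)ᵀ)
    have h2 := frobSq_nonneg' (φ - ridge K μ A)
    have : 0 ≤ μ ^ 2 * frobSq (φ - ridge K μ A) := by positivity
    linarith
  · rw [frob_identity K μ hμ A φ] at h
    have h1 := frobSq_nonneg' (K * (φ - ridge K μ A)ᵀ)
    have h2 := frobSq_nonneg' (φ - ridge K μ A)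
    have h3 : 0 ≤ μ ^ 2 * frobSq (φ - ridge K μ A) := by positivity
    have h4 : μ ^ 2 * frobSq (φ - ridge K μ A) = 0 := by linarith
    have h5 := (mul_eq_zero.1 h4).resolve_left (by positivity)
    exact sub_eq_zero.1 (frobSq_eq_zero' _ h5)
  · simp [ridge, Matrix.mul_add]
  · simp [ridge]
  · unfold opNorm
    refine ContinuousLinearMap.opNorm_le_bound _ (norm_nonneg _) fun v => ?_
    refine le_trans ?_ (ContinuousLinearMap.le_opNorm _ v)
    simp only [LinearMap.coe_toContinuousLinearMap']
    rw [← sq_le_sq₀ (norm_nonneg _) (norm_nonneg _), norm_sq_fromRows, norm_sq_fromRows]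
    have h := gram_identity K μ A (ridge K μ A)ᵀ (φ - ridge K μ A)ᵀ (ridge_normal K μ hμ A)
    have e : (ridge K μ A)ᵀ + (φ - ridge K μ A)ᵀ = φᵀ := by
      rw [← Matrix.transpose_add]; simp
    rw [e] at h
    rw [h, Matrix.add_mulVec _ (_ + _), dotProduct_add, ← norm_sq_fromRows (K * _) μ _ v]
    have := sq_nonneg ‖Matrix.toEuclideanLin
      (Matrix.fromRows (K * (φ - ridge K μ A)ᵀ) (μ • (φ - ridge K μ A)ᵀ)) v‖
    linarith
end

section
/- Let Ñ, L̄, m ≥ 1, let K ∈ ℝ^{Ñ×L̄}, let Δ ∈ ℝ^{Ñ×m}, let μ > 0, and let φ_r ∈ ℝ^{m×L̄} be defined by φ_rᵀ := (KᵀK + μ²I_{L̄})^{−1}·Kᵀ·Δ. Then max{ ‖Δ − Kφ_rᵀ‖_op , μ·‖φ_r‖_op } ≤ Opt_μ, where Opt_μ := min over φ ∈ ℝ^{m×L̄} of ( ‖Δ − Kφᵀ‖_op + μ·‖φ‖_op ). -/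
open Matrix

theorem opNorm_bound {α β : Type*} [Fintype α] [Fintype β] [DecidableEq β]
    (A : Matrix α β ℝ) (v : β → ℝ) :
    (A *ᵥ v) ⬝ᵥ (A *ᵥ v) ≤ opNorm A ^ 2 * (v ⬝ᵥ v) := by
  have h := (LinearMap.toContinuousLinearMap (Matrix.toEuclideanLin A)).le_opNorm (WithLp.toLp 2 v)
  have h2 := pow_le_pow_left₀ (norm_nonneg _) h 2
  rw [mul_pow, EuclideanSpace.real_norm_sq_eq, EuclideanSpace.real_norm_sq_eq] at h2
  simpa [opNorm, dotProduct, pow_two] using h2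

theorem opNorm_le_of {α β : Type*} [Fintype α] [Fintype β] [DecidableEq β]
    (A : Matrix α β ℝ) (c : ℝ) (hc : 0 ≤ c)
    (h : ∀ v : β → ℝ, (A *ᵥ v) ⬝ᵥ (A *ᵥ v) ≤ c ^ 2 * (v ⬝ᵥ v)) : opNorm A ≤ c := by
  refine ContinuousLinearMap.opNorm_le_bound _ hc fun v => ?_
  refine (abs_le_of_sq_le_sq' ?_ (by positivity)).2
  rw [mul_pow, EuclideanSpace.real_norm_sq_eq, EuclideanSpace.real_norm_sq_eq]
  have := h v.ofLp
  simpa [dotProduct, pow_two, Matrix.toLpLin_apply] using this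

theorem opNorm_nonneg' {α β : Type*} [Fintype α] [Fintype β] [DecidableEq β]
    (A : Matrix α β ℝ) : 0 ≤ opNorm A := norm_nonneg _

open scoped Matrix.Norms.L2Operator in
theorem opNorm_transpose' {α β : Type*} [Fintype α] [Fintype β] [DecidableEq α] [DecidableEq β]
    (A : Matrix α β ℝ) : opNorm Aᵀ = opNorm A := by
  have h := Matrix.l2_opNorm_conjTranspose A
  rw [Matrix.conjTranspose_eq_transpose_of_trivial] at h
  exact h

theorem ridge_opt {α β : Type*} [Fintype α] [Fintype β]
    (K : Matrix α β ℝ) (d : α → ℝ) (μ : ℝ) (p q : β → ℝ)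
    (h : Kᵀ *ᵥ (d - K *ᵥ p) = μ ^ 2 • p) :
    (d - K *ᵥ p) ⬝ᵥ (d - K *ᵥ p) + μ ^ 2 * (p ⬝ᵥ p) ≤
      (d - K *ᵥ q) ⬝ᵥ (d - K *ᵥ q) + μ ^ 2 * (q ⬝ᵥ q) := by
  obtain ⟨e, rfl⟩ : ∃ e, q = p + e := ⟨q - p, by simp⟩
  set r := d - K *ᵥ p with hr
  have h1 : d - K *ᵥ (p + e) = r - K *ᵥ e := by rw [hr, mulVec_add]; abel
  have h2 : r ⬝ᵥ (K *ᵥ e) = μ ^ 2 * (p ⬝ᵥ e) := by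
    rw [dotProduct_mulVec, ← mulVec_transpose, h, smul_dotProduct, smul_eq_mul]
  have h3 : 0 ≤ (K *ᵥ e) ⬝ᵥ (K *ᵥ e) := by
    simpa using dotProduct_star_self_nonneg (K *ᵥ e)
  have h4 : 0 ≤ μ ^ 2 * (e ⬝ᵥ e) :=
    mul_nonneg (sq_nonneg _) (by simpa using dotProduct_star_self_nonneg e)
  rw [h1]
  simp only [sub_dotProduct, dotProduct_sub, add_dotProduct, dotProduct_add]
  rw [dotProduct_comm (K *ᵥ e) r, dotProduct_comm e p, h2]
  linarith

theorem stmt9 {Nt L m : ℕ} (hNt : 1 ≤ Nt) (hL : 1 ≤ L) (hm : 1 ≤ m)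
    (K : Matrix (Fin Nt) (Fin L) ℝ) (Δ : Matrix (Fin Nt) (Fin m) ℝ)
    (μ : ℝ) (hμ : 0 < μ) (φr : Matrix (Fin m) (Fin L) ℝ)
    (hφr : φrᵀ = (Kᵀ * K + μ ^ 2 • (1 : Matrix (Fin L) (Fin L) ℝ))⁻¹ * Kᵀ * Δ) :
    max (opNorm (Δ - K * φrᵀ)) (μ * opNorm φr) ≤
      ⨅ φ : Matrix (Fin m) (Fin L) ℝ, (opNorm (Δ - K * φᵀ) + μ * opNorm φ) := by
  have hpd : (Kᵀ * K + μ ^ 2 • (1 : Matrix (Fin L) (Fin L) ℝ)).PosDef := by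
    refine Matrix.PosDef.posSemidef_add ?_ ?_
    · simpa using Matrix.posSemidef_conjTranspose_mul_self K
    · exact Matrix.PosDef.one.smul (by positivity)
  have hdet := (Matrix.isUnit_iff_isUnit_det _).1 hpd.isUnit
  have hM : (Kᵀ * K + μ ^ 2 • (1 : Matrix (Fin L) (Fin L) ℝ)) * φrᵀ = Kᵀ * Δ := by
    rw [hφr, Matrix.mul_assoc, Matrix.mul_nonsing_inv_cancel_left _ _ hdet]
  have hN : Kᵀ * (Δ - K * φrᵀ) = μ ^ 2 • φrᵀ := by
    rw [Matrix.mul_sub, ← hM, Matrix.add_mul, Matrix.mul_assoc]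
    simp
  refine le_ciInf fun φ => ?_
  set a := opNorm (Δ - K * φᵀ) with ha
  set b := opNorm φ with hb
  have ha0 : 0 ≤ a := opNorm_nonneg' _
  have hb0 : 0 ≤ b := opNorm_nonneg' _
  have key : ∀ v : Fin m → ℝ,
      ((Δ - K * φrᵀ) *ᵥ v) ⬝ᵥ ((Δ - K * φrᵀ) *ᵥ v) + μ ^ 2 * ((φrᵀ *ᵥ v) ⬝ᵥ (φrᵀ *ᵥ v))
        ≤ (a + μ * b) ^ 2 * (v ⬝ᵥ v) := by
    intro v
    have e : ∀ Q : Matrix (Fin L) (Fin m) ℝ,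
        (Δ - K * Q) *ᵥ v = Δ *ᵥ v - K *ᵥ (Q *ᵥ v) := by
      intro Q; rw [sub_mulVec, mulVec_mulVec]
    have h1 := ridge_opt K (Δ *ᵥ v) μ (φrᵀ *ᵥ v) (φᵀ *ᵥ v)
      (by rw [← e, mulVec_mulVec, hN, smul_mulVec])
    rw [← e, ← e] at h1
    have h2 := opNorm_bound (Δ - K * φᵀ) v
    have h3 := opNorm_bound φᵀ v
    rw [opNorm_transpose', ← hb] at h3
    rw [← ha] at h2
    have hv : 0 ≤ v ⬝ᵥ v := by simpa using dotProduct_star_self_nonneg v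
    have h4 := mul_le_mul_of_nonneg_left h3 (sq_nonneg μ)
    have h5 : 0 ≤ 2 * (a * (μ * b)) * (v ⬝ᵥ v) := by positivity
    nlinarith
  have hc : 0 ≤ a + μ * b := by positivity
  refine max_le ?_ ?_
  · refine opNorm_le_of _ _ hc fun v => ?_
    have h1 : 0 ≤ μ ^ 2 * ((φrᵀ *ᵥ v) ⬝ᵥ (φrᵀ *ᵥ v)) :=
      mul_nonneg (sq_nonneg _) (by simpa using dotProduct_star_self_nonneg (φrᵀ *ᵥ v))
    linarith [key v]
  · rw [← opNorm_transpose', mul_comm, ← le_div_iff₀ hμ]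
    refine opNorm_le_of _ _ (by positivity) fun v => ?_
    have h1 : 0 ≤ ((Δ - K * φrᵀ) *ᵥ v) ⬝ᵥ ((Δ - K * φrᵀ) *ᵥ v) := by
      simpa using dotProduct_star_self_nonneg ((Δ - K * φrᵀ) *ᵥ v)
    rw [div_pow, div_mul_eq_mul_div, le_div_iff₀ (by positivity)]
    linarith [key v]
end

section
/- Let Ñ, L̄, m, q ≥ 1, let K ∈ ℝ^{Ñ×L̄}, Ū ∈ ℝ^{Ñ×q}, G⋆ ∈ ℝ^{m×q}, Δ ∈ ℝ^{Ñ×m}, and μ > 0. Set Y := Ū·G⋆ᵀ + Δ, and for A ∈ ℝ^{Ñ×m} define ridge(A, μ) ∈ ℝ^{m×L̄} by ridge(A, μ)ᵀ := (KᵀK + μ²I_{L̄})^{−1}·Kᵀ·A; let φ_rdg := ridge(Y, μ) and let Opt_μ := min over φ ∈ ℝ^{m×L̄} of ( ‖Δ − Kφᵀ‖_op + μ·‖φ‖_op ). Then: (a) ‖Δ − K·φ_rdgᵀ‖_op ≤ Opt_μ + ‖K·ridge(Ū G⋆ᵀ, μ)ᵀ‖_op; and (b) μ·‖φ_rdg‖_op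 ≤ Opt_μ + μ·‖ridge(Ū G⋆ᵀ, μ)‖_op. -/
open Matrix

lemma norm_toLp_sq_aux {n : ℕ} (v : Fin n → ℝ) : ‖WithLp.toLp 2 v‖ ^ 2 = v ⬝ᵥ v := by
  rw [EuclideanSpace.real_norm_sq_eq]
  simp [dotProduct, sq]

lemma opNorm_nonneg_aux {a b : ℕ} (A : Matrix (Fin a) (Fin b) ℝ) : 0 ≤ opNorm A := norm_nonneg _

lemma opNorm_mulVec_aux {a b : ℕ} (A : Matrix (Fin a) (Fin b) ℝ) (v : Fin b → ℝ) :
    (A *ᵥ v) ⬝ᵥ (A *ᵥ v) ≤ opNorm A ^ 2 * (v ⬝ᵥ v) := by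
  have h := (LinearMap.toContinuousLinearMap (Matrix.toEuclideanLin A)).le_opNorm (WithLp.toLp 2 v)
  rw [← norm_toLp_sq_aux, ← norm_toLp_sq_aux, ← mul_pow]
  exact pow_le_pow_left₀ (norm_nonneg _) h 2

lemma opNorm_le_aux {a b : ℕ} (A : Matrix (Fin a) (Fin b) ℝ) (c : ℝ) (hc : 0 ≤ c)
    (h : ∀ v : Fin b → ℝ, (A *ᵥ v) ⬝ᵥ (A *ᵥ v) ≤ c ^ 2 * (v ⬝ᵥ v)) : opNorm A ≤ c := by
  refine ContinuousLinearMap.opNorm_le_bound _ hc fun x => ?_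
  have h1 := h (WithLp.ofLp x)
  rw [← norm_toLp_sq_aux, ← norm_toLp_sq_aux, ← mul_pow] at h1
  exact le_of_sq_le_sq h1 (by positivity)

lemma opNorm_add_aux {a b : ℕ} (A B : Matrix (Fin a) (Fin b) ℝ) :
    opNorm (A + B) ≤ opNorm A + opNorm B := by
  unfold opNorm
  rw [map_add, map_add]
  exact norm_add_le _ _

lemma opNorm_sub_aux {a b : ℕ} (A B : Matrix (Fin a) (Fin b) ℝ) :
    opNorm (A - B) ≤ opNorm A + opNorm B := by
  unfold opNorm
  rw [map_sub, map_sub]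
  exact norm_sub_le _ _

open scoped Matrix.Norms.L2Operator in
lemma opNorm_transpose_aux {a b : ℕ} (A : Matrix (Fin a) (Fin b) ℝ) :
    opNorm Aᵀ = opNorm A := by
  have h := Matrix.l2_opNorm_conjTranspose A
  rw [Matrix.l2_opNorm_def, Matrix.l2_opNorm_def, Matrix.conjTranspose_eq_transpose_of_trivial] at h
  exact h

lemma normal_eq_aux {Nt L m : ℕ} (K : Matrix (Fin Nt) (Fin L) ℝ) (μ : ℝ) (hμ : 0 < μ)
    (A : Matrix (Fin Nt) (Fin m) ℝ) :
    (Kᵀ * K + μ ^ 2 • (1 : Matrix (Fin L) (Fin L) ℝ)) * (ridge K μ A)ᵀ = Kᵀ * A := by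
  have hp : (Kᵀ * K + μ ^ 2 • (1 : Matrix (Fin L) (Fin L) ℝ)).PosDef := by
    refine Matrix.PosDef.posSemidef_add ?_ (Matrix.PosDef.one.smul (by positivity))
    have := Matrix.posSemidef_conjTranspose_mul_self K
    rwa [Matrix.conjTranspose_eq_transpose_of_trivial] at this
  unfold ridge
  rw [Matrix.transpose_transpose, Matrix.mul_assoc,
    Matrix.mul_nonsing_inv_cancel_left _ _ ((Matrix.isUnit_iff_isUnit_det _).1 hp.isUnit)]

lemma key_aux {Nt L m : ℕ} (K : Matrix (Fin Nt) (Fin L) ℝ) (μ : ℝ) (hμ : 0 < μ)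
    (Δ : Matrix (Fin Nt) (Fin m) ℝ) (φ : Matrix (Fin m) (Fin L) ℝ) (v : Fin m → ℝ) :
    ((Δ - K * (ridge K μ Δ)ᵀ) *ᵥ v) ⬝ᵥ ((Δ - K * (ridge K μ Δ)ᵀ) *ᵥ v)
      + μ ^ 2 * (((ridge K μ Δ)ᵀ *ᵥ v) ⬝ᵥ ((ridge K μ Δ)ᵀ *ᵥ v)) ≤
    (opNorm (Δ - K * φᵀ) + μ * opNorm φ) ^ 2 * (v ⬝ᵥ v) := by
  have hn := congrArg (· *ᵥ v) (normal_eq_aux K μ hμ Δ)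
  have h1 := opNorm_mulVec_aux (Δ - K * φᵀ) v
  have h2 := opNorm_mulVec_aux φᵀ v
  rw [opNorm_transpose_aux] at h2
  simp only [← Matrix.mulVec_mulVec, Matrix.add_mulVec, Matrix.smul_mulVec, Matrix.one_mulVec,
    Matrix.sub_mulVec] at hn h1 ⊢
  set d := Δ *ᵥ v
  set x := (ridge K μ Δ)ᵀ *ᵥ v
  set y := φᵀ *ᵥ v
  have hc : (d - K *ᵥ x) ⬝ᵥ (K *ᵥ (y - x)) = μ ^ 2 * (x ⬝ᵥ (y - x)) := by
    rw [Matrix.dotProduct_mulVec, ← Matrix.mulVec_transpose, Matrix.mulVec_sub, ← hn,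
      add_sub_cancel_left, smul_dotProduct, smul_eq_mul]
  have e1 : d - K *ᵥ y = (d - K *ᵥ x) - K *ᵥ (y - x) := by
    rw [Matrix.mulVec_sub]; abel
  have e2 : y = x + (y - x) := by abel
  have e3 : (d - K *ᵥ y) ⬝ᵥ (d - K *ᵥ y) = (d - K *ᵥ x) ⬝ᵥ (d - K *ᵥ x)
      - 2 * ((d - K *ᵥ x) ⬝ᵥ (K *ᵥ (y - x))) + (K *ᵥ (y - x)) ⬝ᵥ (K *ᵥ (y - x)) := by
    rw [e1]
    generalize d - K *ᵥ x = p
    generalize K *ᵥ (y - x) = r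
    rw [sub_dotProduct, dotProduct_sub, dotProduct_sub, dotProduct_comm r p]; ring
  have e4 : y ⬝ᵥ y = x ⬝ᵥ x + 2 * (x ⬝ᵥ (y - x)) + (y - x) ⬝ᵥ (y - x) := by
    simp only [sub_dotProduct, dotProduct_sub, dotProduct_comm y x]; ring
  have p1 : 0 ≤ (K *ᵥ (y - x)) ⬝ᵥ (K *ᵥ (y - x)) := by
    rw [← norm_toLp_sq_aux]; positivity
  have p2 : 0 ≤ μ ^ 2 * ((y - x) ⬝ᵥ (y - x)) := by
    rw [← norm_toLp_sq_aux]; positivity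
  have p3 : 0 ≤ v ⬝ᵥ v := by
    rw [← norm_toLp_sq_aux]; positivity
  have h3 := mul_le_mul_of_nonneg_left h2 (sq_nonneg μ)
  have h4 : 0 ≤ 2 * (opNorm (Δ - K * φᵀ) * (μ * opNorm φ)) * (v ⬝ᵥ v) := by
    have := opNorm_nonneg_aux (Δ - K * φᵀ)
    have := opNorm_nonneg_aux φ
    positivity
  rw [e4] at h3
  rw [e3, hc] at h1
  linarith

theorem stmt10 {Nt L m q : ℕ} (hNt : 1 ≤ Nt) (hL : 1 ≤ L) (hm : 1 ≤ m) (hq : 1 ≤ q)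
    (K : Matrix (Fin Nt) (Fin L) ℝ) (Ubar : Matrix (Fin Nt) (Fin q) ℝ)
    (G : Matrix (Fin m) (Fin q) ℝ) (Δ : Matrix (Fin Nt) (Fin m) ℝ)
    (μ : ℝ) (hμ : 0 < μ) (Y : Matrix (Fin Nt) (Fin m) ℝ) (hY : Y = Ubar * Gᵀ + Δ) :
    opNorm (Δ - K * (ridge K μ Y)ᵀ) ≤
        (⨅ φ : Matrix (Fin m) (Fin L) ℝ, (opNorm (Δ - K * φᵀ) + μ * opNorm φ)) +
          opNorm (K * (ridge K μ (Ubar * Gᵀ))ᵀ) ∧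
    μ * opNorm (ridge K μ Y) ≤
        (⨅ φ : Matrix (Fin m) (Fin L) ℝ, (opNorm (Δ - K * φᵀ) + μ * opNorm φ)) +
          μ * opNorm (ridge K μ (Ubar * Gᵀ)) := by
  have hr : ridge K μ Y = ridge K μ Δ + ridge K μ (Ubar * Gᵀ) := by
    rw [hY]; unfold ridge
    rw [Matrix.mul_add, Matrix.transpose_add, add_comm]
  have hnn : ∀ φ : Matrix (Fin m) (Fin L) ℝ, 0 ≤ opNorm (Δ - K * φᵀ) + μ * opNorm φ := fun φ =>
    add_nonneg (opNorm_nonneg_aux _) (mul_nonneg hμ.le (opNorm_nonneg_aux _))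
  constructor
  · have ha : opNorm (Δ - K * (ridge K μ Δ)ᵀ) ≤
        ⨅ φ : Matrix (Fin m) (Fin L) ℝ, (opNorm (Δ - K * φᵀ) + μ * opNorm φ) := by
      refine le_ciInf fun φ => opNorm_le_aux _ _ (hnn φ) fun v => ?_
      have h := key_aux K μ hμ Δ φ v
      have p : 0 ≤ μ ^ 2 * (((ridge K μ Δ)ᵀ *ᵥ v) ⬝ᵥ ((ridge K μ Δ)ᵀ *ᵥ v)) := by
        rw [← norm_toLp_sq_aux]; positivity
      linarith
    have e : Δ - K * (ridge K μ Y)ᵀ =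
        (Δ - K * (ridge K μ Δ)ᵀ) - K * (ridge K μ (Ubar * Gᵀ))ᵀ := by
      rw [hr, Matrix.transpose_add, Matrix.mul_add]; abel
    rw [e]
    exact (opNorm_sub_aux _ _).trans (add_le_add_left ha _)
  · have hb : μ * opNorm (ridge K μ Δ) ≤
        ⨅ φ : Matrix (Fin m) (Fin L) ℝ, (opNorm (Δ - K * φᵀ) + μ * opNorm φ) := by
      refine le_ciInf fun φ => ?_
      rw [mul_comm, ← le_div_iff₀ hμ, ← opNorm_transpose_aux]
      refine opNorm_le_aux _ _ (div_nonneg (hnn φ) hμ.le) fun v => ?_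
      have h := key_aux K μ hμ Δ φ v
      have p : 0 ≤ ((Δ - K * (ridge K μ Δ)ᵀ) *ᵥ v) ⬝ᵥ ((Δ - K * (ridge K μ Δ)ᵀ) *ᵥ v) := by
        rw [← norm_toLp_sq_aux]; positivity
      rw [div_pow, div_mul_eq_mul_div, le_div_iff₀ (by positivity)]
      linarith
    rw [hr]
    have := mul_le_mul_of_nonneg_left
      (opNorm_add_aux (ridge K μ Δ) (ridge K μ (Ubar * Gᵀ))) hμ.le
    linarith
end

section
/- Let n, m ≥ 1 and T, d ≥ 1 be integers, let σ > 0, let A ∈ ℝ^{n×n} and C ∈ ℝ^{m×n}, and let 𝒪 ∈ ℝ^{dm×n} be the stacked matrix with block rows C, C·A^T, C·A^{2T}, …, C·A^{(d−1)T} (where A^T denotes the T-th matrix power of A). Assume: (i) the row space of C is contained in the row space of A (i.e., range(Cᵀ) ⊆ range(Aᵀ) as subspaces of ℝ^n); and (ii) for every x ∈ range(Aᵀ), ‖𝒪·x‖₂ ≥ σ·‖x‖₂. Then there exists a matrix φ ∈ ℝ^{m×dm} such that φ·𝒪 = C·A^{Td} and ‖φ‖_op ≤ ‖C·A^{Td}‖_op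 / σ. -/
open Matrix

lemma exists_filter {E F G : Type*} [NormedAddCommGroup E] [InnerProductSpace ℝ E]
    [FiniteDimensional ℝ E] [NormedAddCommGroup F] [InnerProductSpace ℝ F]
    [FiniteDimensional ℝ F] [NormedAddCommGroup G] [InnerProductSpace ℝ G]
    [FiniteDimensional ℝ G] (f : E →ₗ[ℝ] F) (g : E →ₗ[ℝ] G) (R : Submodule ℝ E)
    (σ : ℝ) (hσ : 0 < σ) (hR : ∀ r ∈ R, σ * ‖r‖ ≤ ‖f r‖)
    (hdec : ∀ x, ∃ r ∈ R, f x = f r ∧ g x = g r) :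
    ∃ h : F →ₗ[ℝ] G, h ∘ₗ f = g ∧
      ‖LinearMap.toContinuousLinearMap h‖ ≤ ‖LinearMap.toContinuousLinearMap g‖ / σ := by
  have hinj : Function.Injective (f.domRestrict R) := by
    rw [injective_iff_map_eq_zero]
    rintro ⟨r, hr⟩ h0
    have h1 := hR r hr
    have h2 : f r = 0 := h0
    rw [h2, norm_zero] at h1
    have h3 : ‖r‖ = 0 := le_antisymm (by nlinarith [norm_nonneg r]) (norm_nonneg r)
    ext
    simpa using h3
  let S := LinearMap.range (f.domRestrict R)
  let L : R ≃ₗ[ℝ] S := LinearEquiv.ofInjective (f.domRestrict R) hinj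
  let P : F →ₗ[ℝ] S := S.orthogonalProjectionOnto.toLinearMap
  refine ⟨g ∘ₗ R.subtype ∘ₗ L.symm.toLinearMap ∘ₗ P, ?_, ?_⟩
  · ext x
    obtain ⟨r, hr, hf, hg⟩ := hdec x
    have h1 : P (f r) = L ⟨r, hr⟩ :=
      Submodule.orthogonalProjectionOnto_mem_subspace_eq_self (K := S) (L ⟨r, hr⟩)
    simp only [LinearMap.comp_apply, hf, h1, hg]
    simp
  · refine ContinuousLinearMap.opNorm_le_bound _ (by positivity) fun y => ?_
    have hL : f (L.symm (P y) : E) = (P y : F) := by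
      have := L.apply_symm_apply (P y)
      exact congrArg Subtype.val this
    have h1 := hR _ (L.symm (P y)).2
    rw [hL] at h1
    have h2 : ‖(P y : F)‖ ≤ ‖y‖ := S.norm_orthogonalProjectionOnto_apply_le y
    have h3 := (LinearMap.toContinuousLinearMap g).le_opNorm (L.symm (P y) : E)
    have h4 : ‖(L.symm (P y) : E)‖ ≤ ‖y‖ / σ := by
      rw [le_div_iff₀ hσ]; linarith
    calc _ ≤ _ := h3
      _ ≤ ‖LinearMap.toContinuousLinearMap g‖ * (‖y‖ / σ) := by gcongr
      _ = _ := by ring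

/-- Strong observability: existence of a filter reconstructing `C·A^{Td}` from the
`T`-subsampled `d`-step observability matrix, with operator norm at most `‖C·A^{Td}‖/σ`. -/
theorem stmt19 {n m : ℕ} (T d : ℕ) (hn : 1 ≤ n) (hm : 1 ≤ m) (hT : 1 ≤ T) (hd : 1 ≤ d)
    (σ : ℝ) (hσ : 0 < σ)
    (A : Matrix (Fin n) (Fin n) ℝ) (C : Matrix (Fin m) (Fin n) ℝ)
    (O : Matrix (Fin d × Fin m) (Fin n) ℝ)
    (hO : ∀ (j : Fin d) (i : Fin m) (l : Fin n), O (j, i) l = (C * A ^ ((j : ℕ) * T)) i l)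
    -- (i) row space of `C` is contained in the row space of `A`
    (hrow : ∀ y : Fin n → ℝ, (∃ x, Cᵀ.mulVec x = y) → ∃ w, Aᵀ.mulVec w = y)
    -- (ii) `𝒪` is bounded below by `σ` on the row space of `A`
    (hobs : ∀ x : Fin n → ℝ, (∃ w, Aᵀ.mulVec w = x) →
      σ * Real.sqrt (∑ l, x l ^ 2) ≤ Real.sqrt (∑ ji, (O.mulVec x ji) ^ 2)) :
    ∃ φ : Matrix (Fin m) (Fin d × Fin m) ℝ,
      φ * O = C * A ^ (T * d) ∧ opNorm φ ≤ opNorm (C * A ^ (T * d)) / σ := by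
  have hker : ∀ z : Fin n → ℝ, A *ᵥ z = 0 → C *ᵥ z = 0 := by
    intro z hz
    obtain ⟨w, hw⟩ := hrow _ ⟨C *ᵥ z, rfl⟩
    have h1 : (C *ᵥ z) ⬝ᵥ (C *ᵥ z) = 0 := by
      rw [Matrix.dotProduct_mulVec, ← Matrix.mulVec_transpose, ← hw, Matrix.mulVec_transpose,
        ← Matrix.dotProduct_mulVec, hz, dotProduct_zero]
    exact dotProduct_self_eq_zero.mp h1
  have hpow : ∀ (z : Fin n → ℝ), A *ᵥ z = 0 → ∀ k : ℕ, (C * A ^ k) *ᵥ z = 0 := by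
    intro z hz k
    cases k with
    | zero => simpa using hker z hz
    | succ k =>
      rw [pow_succ, ← Matrix.mul_assoc, ← Matrix.mulVec_mulVec, hz, Matrix.mulVec_zero]
  have hOz : ∀ (z : Fin n → ℝ), A *ᵥ z = 0 → O *ᵥ z = 0 := by
    intro z hz
    ext ⟨j, i⟩
    have := congrFun (hpow z hz (j * T)) i
    simpa [Matrix.mulVec, dotProduct, hO] using this
  let R : Submodule ℝ (EuclideanSpace ℝ (Fin n)) := LinearMap.range (Matrix.toEuclideanLin Aᵀ)
  obtain ⟨h, hh, hn⟩ := exists_filter (Matrix.toEuclideanLin O)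
    (Matrix.toEuclideanLin (C * A ^ (T * d))) R σ hσ (by
      rintro r ⟨w, rfl⟩
      have := hobs _ ⟨w.ofLp, rfl⟩
      simpa [EuclideanSpace.norm_eq, Matrix.toLpLin_apply] using this) (by
      intro x
      have hz : A *ᵥ (x - R.starProjection x).ofLp = 0 := by
        set z := x - R.starProjection x with hzdef
        have hzR : z ∈ Rᗮ := Submodule.sub_starProjection_mem_orthogonal x
        have h1 := (Submodule.mem_orthogonal' _ _).1 hzR _ ⟨WithLp.toLp 2 (A *ᵥ z.ofLp), rfl⟩
        have h2 : (A *ᵥ z.ofLp) ⬝ᵥ (A *ᵥ z.ofLp) = 0 := by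
          rw [Matrix.dotProduct_mulVec, ← Matrix.mulVec_transpose]
          simpa [EuclideanSpace.inner_eq_star_dotProduct, Matrix.toLpLin_apply] using h1
        exact dotProduct_self_eq_zero.mp h2
      refine ⟨R.starProjection x, Submodule.starProjection_apply_mem _ _, ?_, ?_⟩
      · rw [← sub_eq_zero, ← map_sub, Matrix.toLpLin_apply, hOz _ hz]; rfl
      · rw [← sub_eq_zero, ← map_sub, Matrix.toLpLin_apply, hpow _ hz]; rfl)
  refine ⟨Matrix.toEuclideanLin.symm h, ?_, ?_⟩
  · apply Matrix.toEuclideanLin.injective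
    rw [← hh]
    conv_rhs => rw [← Matrix.toEuclideanLin.apply_symm_apply h]
    ext x i
    simp [Matrix.toLpLin_apply, Matrix.mulVec_mulVec]
  · unfold opNorm
    rw [LinearEquiv.apply_symm_apply]
    exact hn
end
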